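/- arXiv:0901.3995 — 6 statements merged into one kernel-verified Lean document; each statement's English description precedes it below -/
import Mathlib

section
/- Let N ≥ 1 be an integer, let n > 0, and set p = 1 + n + 4/N and β = 1/(4 + nN). Suppose g : ℝ^N → ℝ is a nonnegative C⁴ function with compact support such that the vector field y ↦ g(y)^n ∇(Δg)(y) is C¹, and g satisfies −div(g^n ∇(Δg))(y) + β y·∇g(y) + β N g(y) − g(y)^p = 0 for every y ∈ ℝ^N. Then g is identically zero. (The stationary rescaled thin-film equation with critical absorption has no nontrivial compactly supported nonnegative solution.) -/
open MeasureTheory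
open scoped RealInnerProductSpace

/-- The Laplacian of a scalar function on `ℝ^N`. -/
noncomputable def lap {N : ℕ} (f : EuclideanSpace ℝ (Fin N) → ℝ)
    (x : EuclideanSpace ℝ (Fin N)) : ℝ :=
  ∑ i : Fin N, fderiv ℝ (fun y => fderiv ℝ f y (EuclideanSpace.single i 1)) x
    (EuclideanSpace.single i 1)

/-- The divergence of a vector field on `ℝ^N`. -/
noncomputable def diverg {N : ℕ}
    (V : EuclideanSpace ℝ (Fin N) → EuclideanSpace ℝ (Fin N))
    (x : EuclideanSpace ℝ (Fin N)) : ℝ :=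
  ∑ i : Fin N, fderiv ℝ (fun y => V y i) x (EuclideanSpace.single i 1)

/-! Only the divergence structure of the equation matters. Since `β (y · ∇g + N g) = div (β g y)`,
the equation says that `g ^ p` is the divergence of the compactly supported `C¹` field
`β g y - g ^ n ∇Δg`. Hence `g ^ p` has integral zero, and being continuous and nonnegative it
vanishes identically. -/

section FDeriv

variable {E F : Type*} [NormedAddCommGroup E] [NormedSpace ℝ E] [FiniteDimensional ℝ E]
  [NormedAddCommGroup F] [NormedSpace ℝ F]

lemma integral_fderiv_eq_zero [MeasurableSpace E] [BorelSpace E] {μ : Measure E}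
    [μ.IsAddHaarMeasure] {f : E → F} (hf : Differentiable ℝ f) (hf_int : Integrable f μ)
    (hf'_int : Integrable (fderiv ℝ f) μ) : ∫ x, fderiv ℝ f x ∂μ = 0 := by
  ext v
  rw [ContinuousLinearMap.integral_apply hf'_int v]
  simpa using integral_smul_fderiv_eq_neg_fderiv_smul_of_integrable (μ := μ) (v := v)
    (f := fun _ : E => (1 : ℝ)) (by simp) (by simpa using hf'_int.apply_continuousLinearMap v)
    (by simpa using hf_int) (fun _ _ => by fun_prop) (fun x _ => hf x)

variable (E) in
/-- The trace of endomorphisms of a finite-dimensional real normed space, bundled as a continuous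
linear functional so that it commutes with integrals of operator-valued functions. -/
noncomputable def traceCLM : (E →L[ℝ] E) →L[ℝ] ℝ :=
  LinearMap.toContinuousLinearMap (LinearMap.trace ℝ E ∘ₗ ContinuousLinearMap.coeLM ℝ)

lemma traceCLM_apply (T : E →L[ℝ] E) : traceCLM E T = LinearMap.trace ℝ E T := rfl

end FDeriv

section Divergence

variable {N : ℕ} {f : EuclideanSpace ℝ (Fin N) → ℝ}
  {V W : EuclideanSpace ℝ (Fin N) → EuclideanSpace ℝ (Fin N)} {x : EuclideanSpace ℝ (Fin N)}

lemma diverg_eq_traceCLM_fderiv (hV : DifferentiableAt ℝ V x) :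
    diverg V x = traceCLM _ (fderiv ℝ V x) := by
  rw [traceCLM_apply, LinearMap.trace_eq_sum_inner _ (EuclideanSpace.basisFun (Fin N) ℝ)]
  refine Finset.sum_congr rfl fun i _ => ?_
  have fderiv_coord : fderiv ℝ (fun y => V y i) x = (EuclideanSpace.proj i).comp (fderiv ℝ V x) :=
    ((EuclideanSpace.proj (𝕜 := ℝ) i).hasFDerivAt.comp x hV.hasFDerivAt).fderiv
  simp [fderiv_coord, EuclideanSpace.inner_single_left]

lemma diverg_eq_traceCLM_comp_fderiv (hV : Differentiable ℝ V) :
    diverg V = fun x => traceCLM _ (fderiv ℝ V x) :=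
  funext fun x => diverg_eq_traceCLM_fderiv (hV x)

lemma diverg_fun_sub (hV : DifferentiableAt ℝ V x) (hW : DifferentiableAt ℝ W x) :
    diverg (fun y => V y - W y) x = diverg V x - diverg W x := by
  rw [diverg_eq_traceCLM_fderiv (hV.fun_sub hW), fderiv_fun_sub hV hW, map_sub,
    diverg_eq_traceCLM_fderiv hV, diverg_eq_traceCLM_fderiv hW]

lemma diverg_fun_smul (hf : DifferentiableAt ℝ f x) (hV : DifferentiableAt ℝ V x) :
    diverg (fun y => f y • V y) x = f x * diverg V x + ⟪V x, gradient f x⟫ := by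
  have trace_smulRight :
      traceCLM _ ((fderiv ℝ f x).smulRight (V x)) = ⟪V x, gradient f x⟫ := by
    rw [inner_gradient_right, conj_trivial]
    exact LinearMap.trace_smulRight (fderiv ℝ f x).toLinearMap (V x)
  rw [diverg_eq_traceCLM_fderiv (hf.fun_smul hV), fderiv_fun_smul hf hV, map_add, map_smul,
    trace_smulRight, diverg_eq_traceCLM_fderiv hV, smul_eq_mul]

lemma diverg_const_smul_id (c : ℝ) (x : EuclideanSpace ℝ (Fin N)) :
    diverg (fun y => c • y) x = c * N := by
  rw [diverg_eq_traceCLM_fderiv (by fun_prop), fderiv_fun_const_smul (by fun_prop), fderiv_fun_id,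
    map_smul, traceCLM_apply, ContinuousLinearMap.coe_id, LinearMap.trace_id,
    finrank_euclideanSpace_fin, smul_eq_mul]

lemma integral_diverg_eq_zero (hV : Differentiable ℝ V) (hV_int : Integrable V)
    (hV'_int : Integrable (fderiv ℝ V)) : ∫ x, diverg V x = 0 := by
  rw [diverg_eq_traceCLM_comp_fderiv hV, ContinuousLinearMap.integral_comp_comm _ hV'_int,
    integral_fderiv_eq_zero hV hV_int hV'_int, map_zero]

lemma diverg_eq_zero_of_nonneg (hV : ContDiff ℝ 1 V) (hV_int : Integrable V)
    (hV'_int : Integrable (fderiv ℝ V)) (hV_nonneg : 0 ≤ diverg V) : diverg V = 0 := by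
  have hV_diff : Differentiable ℝ V := hV.differentiable one_ne_zero
  have diverg_cont : Continuous (diverg V) := by
    rw [diverg_eq_traceCLM_comp_fderiv hV_diff]
    exact (traceCLM _).continuous.comp (hV.continuous_fderiv one_ne_zero)
  have diverg_int : Integrable (diverg V) := by
    rw [diverg_eq_traceCLM_comp_fderiv hV_diff]
    exact (traceCLM _).integrable_comp hV'_int
  by_contra hne
  obtain ⟨x, hx⟩ := Function.ne_iff.mp hne
  exact (integral_pos_of_integrable_nonneg_nonzero diverg_cont diverg_int hV_nonneg hx).ne'
    (integral_diverg_eq_zero hV_diff hV_int hV'_int)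

end Divergence

theorem stationary_TFE_critical_absorption_trivial_general {N : ℕ} {β : ℝ} {φ : ℝ → ℝ}
    (hφ_zero : φ 0 = 0) (hφ_pos : ∀ s, 0 < s → 0 < φ s)
    {g : EuclideanSpace ℝ (Fin N) → ℝ} (hg_nonneg : ∀ y, 0 ≤ g y) (hg : ContDiff ℝ 1 g)
    (hg_supp : HasCompactSupport g)
    {V : EuclideanSpace ℝ (Fin N) → EuclideanSpace ℝ (Fin N)} (hV : ContDiff ℝ 1 V)
    (hV_supp : HasCompactSupport V)
    (heq : ∀ y, -diverg V y + β * ⟪y, gradient g y⟫ + β * N * g y - φ (g y) = 0) :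
    g = 0 := by
  let W : EuclideanSpace ℝ (Fin N) → EuclideanSpace ℝ (Fin N) := fun y => g y • β • y - V y
  have hW : ContDiff ℝ 1 W := by fun_prop
  have hW_supp : HasCompactSupport W := hg_supp.smul_right.sub hV_supp
  have diverg_W (y) : diverg W y = φ (g y) := by
    have hg_diff : DifferentiableAt ℝ g y := hg.differentiable one_ne_zero y
    rw [diverg_fun_sub (by fun_prop) (hV.differentiable one_ne_zero y),
      diverg_fun_smul hg_diff (by fun_prop), diverg_const_smul_id, real_inner_smul_left]
    linarith [heq y]
  have φ_nonneg (y) : 0 ≤ φ (g y) := by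
    rcases (hg_nonneg y).eq_or_lt with h | h
    · rw [← h, hφ_zero]
    · exact (hφ_pos _ h).le
  have diverg_W_zero : diverg W = 0 := diverg_eq_zero_of_nonneg hW
    (hW.continuous.integrable_of_hasCompactSupport hW_supp)
    ((hW.continuous_fderiv one_ne_zero).integrable_of_hasCompactSupport (hW_supp.fderiv (𝕜 := ℝ)))
    fun y => (φ_nonneg y).trans_eq (diverg_W y).symm
  funext y
  by_contra hy
  have φ_pos : 0 < φ (g y) := hφ_pos _ ((hg_nonneg y).lt_of_ne' hy)
  exact φ_pos.ne' ((diverg_W y).symm.trans (congrFun diverg_W_zero y))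

/-- The stationary rescaled thin-film equation with critical absorption has no
nontrivial compactly supported nonnegative solution. -/
theorem stationary_TFE_critical_absorption_trivial
    (N : ℕ) (hN : 1 ≤ N) (n : ℝ) (hn : 0 < n) (p β : ℝ)
    (hp : p = 1 + n + 4 / N) (hβ : β = 1 / (4 + n * N))
    (g : EuclideanSpace ℝ (Fin N) → ℝ)
    (hg0 : ∀ y, 0 ≤ g y) (hg4 : ContDiff ℝ 4 g) (hgc : HasCompactSupport g)
    (hV : ContDiff ℝ 1 (fun y => (g y ^ n) • gradient (lap g) y))
    (heq : ∀ y, -diverg (fun z => (g z ^ n) • gradient (lap g) z) y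
        + β * ⟪y, gradient g y⟫ + β * N * g y - g y ^ p = 0) :
    g = 0 := by
  have hp_pos : 0 < p := by rw [hp]; positivity
  exact stationary_TFE_critical_absorption_trivial_general (φ := (· ^ p))
    (Real.zero_rpow hp_pos.ne') (fun _ hs => Real.rpow_pos_of_pos hs p) hg0
    (hg4.of_le (by norm_num)) hgc hV
    (hgc.comp_left (g := (· ^ n)) (Real.zero_rpow hn.ne')).smul_right heq
end

section
/- Let N ≥ 1 be an integer, a > 0, c₀ = 1/(8(N+2)(N+4)), β = 1/(N+4), and define F : ℝ^N → ℝ by F(y) = c₀(a² − ‖y‖²)². Then ∇(ΔF)(y) = β y for every y ∈ ℝ^N, and consequently −div(F ∇(ΔF))(y) + β y·∇F(y) + β N F(y) = 0 for every y ∈ ℝ^N. Thus F is the explicit source-type similarity profile of the thin film equation with n = 1. -/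
open scoped RealInnerProductSpace

/-! As soon as `∇ΔF = β y`, the flux `F ∇ΔF` is `β F y`, whose divergence is
`β (y·∇F + N F)` by the product rule; this is the profile equation. For a radial function
`F(y) = φ(‖y‖²)` one has `∇F = 2 φ' y`, hence `ΔF = div ∇F = 4 φ'' ‖y‖² + 2 N φ'`. When `φ` is a
quadratic polynomial, `ΔF` is affine in `‖y‖²`, so `∇ΔF` is a multiple of `y`. -/

section Radial

variable {E : Type*} [NormedAddCommGroup E] [InnerProductSpace ℝ E] [CompleteSpace E]

theorem hasGradientAt_comp_norm_sq {φ : ℝ → ℝ} {φ' : ℝ} {x : E}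
    (hφ : HasDerivAt φ φ' (‖x‖ ^ 2)) :
    HasGradientAt (fun y => φ (‖y‖ ^ 2)) ((2 * φ') • x) x := by
  rw [hasGradientAt_iff_hasFDerivAt]
  refine (hφ.comp_hasFDerivAt x (hasStrictFDerivAt_norm_sq x).hasFDerivAt).congr_fderiv ?_
  ext v
  simp only [smul_apply, innerSL_apply_apply, InnerProductSpace.toDual_apply_apply,
    real_inner_smul_left, smul_eq_mul, nsmul_eq_mul, Nat.cast_ofNat]
  ring

end Radial

section VectorCalculus

variable {N : ℕ} {f : EuclideanSpace ℝ (Fin N) → ℝ}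
  {V W : EuclideanSpace ℝ (Fin N) → EuclideanSpace ℝ (Fin N)} {x : EuclideanSpace ℝ (Fin N)}

theorem gradient_apply_eq_fderiv_single (f : EuclideanSpace ℝ (Fin N) → ℝ)
    (x : EuclideanSpace ℝ (Fin N)) (i : Fin N) :
    gradient f x i = fderiv ℝ f x (EuclideanSpace.single i 1) := by
  rw [← inner_gradient_left, EuclideanSpace.inner_single_right]
  simp

theorem lap_eq_diverg_gradient (f : EuclideanSpace ℝ (Fin N) → ℝ) :
    lap f = diverg (gradient f) := by
  funext x
  simp only [lap, diverg, gradient_apply_eq_fderiv_single]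

theorem diverg_congr_of_eventuallyEq (h : V =ᶠ[nhds x] W) : diverg V x = diverg W x :=
  Finset.sum_congr rfl fun i _ => by
    have hi : (fun y => V y i) =ᶠ[nhds x] fun y => W y i := h.fun_comp (· i)
    rw [hi.fderiv_eq]

theorem diverg_id (x : EuclideanSpace ℝ (Fin N)) : diverg (fun y => y) x = N := by
  have hcoord (i : Fin N) : fderiv ℝ (fun y : EuclideanSpace ℝ (Fin N) => y i) x =
      EuclideanSpace.proj i :=
    (EuclideanSpace.proj (𝕜 := ℝ) i).fderiv
  simp [diverg, hcoord]

theorem diverg_smul (hf : DifferentiableAt ℝ f x) (hV : DifferentiableAt ℝ V x) :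
    diverg (fun y => f y • V y) x = ⟪V x, gradient f x⟫ + f x * diverg V x := by
  have hVi (i : Fin N) : DifferentiableAt ℝ (fun y => V y i) x :=
    differentiableAt_euclidean.1 hV i
  simp only [diverg, PiLp.smul_apply, smul_eq_mul, fderiv_fun_mul hf (hVi _),
    add_apply, smul_apply, Finset.sum_add_distrib, PiLp.inner_apply,
    gradient_apply_eq_fderiv_single, Finset.mul_sum]
  simp [add_comm, mul_comm]

theorem diverg_smul_id (hf : DifferentiableAt ℝ f x) :
    diverg (fun y => f y • y) x = ⟪x, gradient f x⟫ + N * f x := by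
  rw [diverg_smul hf differentiableAt_fun_id, diverg_id, mul_comm]

theorem lap_comp_norm_sq {φ φ' : ℝ → ℝ} {φ'' : ℝ}
    (hφ : ∀ᶠ s in nhds (‖x‖ ^ 2), HasDerivAt φ (φ' s) s) (hφ' : HasDerivAt φ' φ'' (‖x‖ ^ 2)) :
    lap (fun y => φ (‖y‖ ^ 2)) x = 4 * φ'' * ‖x‖ ^ 2 + 2 * N * φ' (‖x‖ ^ 2) := by
  have hgrad : gradient (fun y => φ (‖y‖ ^ 2)) =ᶠ[nhds x] fun y => (2 * φ' (‖y‖ ^ 2)) • y := by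
    have hcont : ContinuousAt (fun y : EuclideanSpace ℝ (Fin N) => ‖y‖ ^ 2) x := by fun_prop
    filter_upwards [hcont.eventually hφ] with y hy
    exact (hasGradientAt_comp_norm_sq hy).gradient
  have hcoeff : HasGradientAt (fun y => 2 * φ' (‖y‖ ^ 2)) ((2 * (2 * φ'')) • x) x :=
    hasGradientAt_comp_norm_sq (hφ'.const_mul 2)
  rw [lap_eq_diverg_gradient, diverg_congr_of_eventuallyEq hgrad,
    diverg_smul_id hcoeff.differentiableAt, hcoeff.gradient, real_inner_smul_right,
    real_inner_self_eq_norm_sq]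
  ring

end VectorCalculus

section Profile

variable {N : ℕ}

theorem profile_equation_of_gradient_lap_eq_smul {F : EuclideanSpace ℝ (Fin N) → ℝ} {β : ℝ}
    (hgrad : ∀ z, gradient (lap F) z = β • z) {y : EuclideanSpace ℝ (Fin N)}
    (hF : DifferentiableAt ℝ F y) :
    -diverg (fun z => F z • gradient (lap F) z) y
      + β * ⟪y, gradient F y⟫ + β * N * F y = 0 := by
  have hflux : (fun z => F z • gradient (lap F) z) = fun z => F z • β • z := by
    simp only [hgrad]
  have hV : diverg (fun z : EuclideanSpace ℝ (Fin N) => β • z) y = β * N := by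
    rw [diverg_smul_id (differentiableAt_const β), gradient_fun_const, inner_zero_right, zero_add,
      mul_comm]
  rw [hflux, diverg_smul hF (by fun_prop), hV, real_inner_smul_left]
  ring

theorem lap_const_mul_sub_norm_sq_sq (b c : ℝ) (x : EuclideanSpace ℝ (Fin N)) :
    lap (fun y => c * (b - ‖y‖ ^ 2) ^ 2) x = c * (4 * (N + 2) * ‖x‖ ^ 2 - 4 * N * b) := by
  have hφ (s : ℝ) : HasDerivAt (fun s => c * (b - s) ^ 2) (-2 * c * (b - s)) s := by
    refine (((hasDerivAt_id' s).const_sub b).fun_pow 2 |>.const_mul c).congr_deriv ?_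
    simp only [Nat.cast_ofNat, Nat.add_one_sub_one, pow_one]
    ring
  have hφ' (s : ℝ) : HasDerivAt (fun s => -2 * c * (b - s)) (2 * c) s := by
    exact ((hasDerivAt_id' s).const_sub b |>.const_mul (-2 * c)).congr_deriv (by ring)
  rw [lap_comp_norm_sq (.of_forall hφ) (hφ' _)]
  ring

theorem gradient_lap_const_mul_sub_norm_sq_sq (b c : ℝ) (x : EuclideanSpace ℝ (Fin N)) :
    gradient (lap fun y => c * (b - ‖y‖ ^ 2) ^ 2) x = (8 * (N + 2) * c) • x := by
  have hφ : HasDerivAt (fun s => c * (4 * (N + 2) * s - 4 * N * b)) (c * (4 * (N + 2)))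
      (‖x‖ ^ 2) := by
    simpa using (hasDerivAt_id' _ |>.const_mul (4 * ((N : ℝ) + 2)) |>.sub_const _).const_mul c
  rw [funext (lap_const_mul_sub_norm_sq_sq b c), (hasGradientAt_comp_norm_sq hφ).gradient]
  congr 1
  ring

end Profile

theorem explicit_similarity_profile_n_eq_one_general
    (N : ℕ) (b c β : ℝ) (hβ : β = 8 * (N + 2) * c) (F : EuclideanSpace ℝ (Fin N) → ℝ)
    (hF : ∀ y, F y = c * (b - ‖y‖ ^ 2) ^ 2) :
    (∀ y, gradient (lap F) y = β • y) ∧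
    (∀ y, -diverg (fun z => F z • gradient (lap F) z) y
        + β * ⟪y, gradient F y⟫ + β * N * F y = 0) := by
  obtain rfl : F = fun y => c * (b - ‖y‖ ^ 2) ^ 2 := funext hF
  subst hβ
  have hgrad := gradient_lap_const_mul_sub_norm_sq_sq (N := N) b c
  have hdiff : Differentiable ℝ fun y : EuclideanSpace ℝ (Fin N) => c * (b - ‖y‖ ^ 2) ^ 2 :=
    (((differentiable_id.norm_sq ℝ).const_sub b).pow 2).const_mul c
  exact ⟨hgrad, fun y => profile_equation_of_gradient_lap_eq_smul hgrad (hdiff y)⟩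

/-- `F(y) = c₀ (a² - ‖y‖²)²` is the explicit source-type similarity profile of the
thin film equation with `n = 1`: `∇(ΔF) = β y` and
`-div(F ∇ΔF) + β y·∇F + β N F = 0`. -/
theorem explicit_similarity_profile_n_eq_one
    (N : ℕ) (hN : 1 ≤ N) (a : ℝ) (ha : 0 < a) (c₀ β : ℝ)
    (hc : c₀ = 1 / (8 * (N + 2) * (N + 4))) (hβ : β = 1 / (N + 4))
    (F : EuclideanSpace ℝ (Fin N) → ℝ)
    (hF : ∀ y, F y = c₀ * (a ^ 2 - ‖y‖ ^ 2) ^ 2) :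
    (∀ y, gradient (lap F) y = β • y) ∧
    (∀ y, -diverg (fun z => F z • gradient (lap F) z) y
        + β * ⟪y, gradient F y⟫ + β * N * F y = 0) :=
  explicit_similarity_profile_n_eq_one_general N (a ^ 2) c₀ β (by rw [hβ, hc]; field_simp) F hF
end

section
/- Let n > 0, β ∈ ℝ, let I ⊆ ℝ be an open interval, and let F ∈ C⁴(I) with F > 0 on I satisfy F(y)^n F'''(y) = β y F(y) for all y ∈ I. Define Y(y) = (4/n)F(y) − y F'(y). Then F(y)^n Y'''(y) = (1−n) β y Y(y) on I; in particular Y satisfies the linearised equation −(F^n Y''')'(y) − n (F^{n−1} Y F''')'(y) + β (y Y(y))' = 0 on I, i.e., Y is an eigenfunction with eigenvalue 0 of the linearised thin-film similarity operator A'(F). -/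
/-!
Differentiating the scaling family `F_a(y) = a^c F(y/a)` at `a = 1` gives the first-order operator
`S_c F = c F - y F'`. It satisfies `(S_c F)' = S_{c-1} F'`, `S_c (y F) = y S_{c-1} F` and
`S_{pc} (F^p) = p F^{p-1} S_c F`. Hence, if `F^{(k)} = β y F^{1-n}`, then
`(S_c F)^{(k)} = S_{c-k} F^{(k)} = β y S_{c-k-1} (F^{1-n})`, and the last rule applies with
`p = 1 - n` precisely when `c - k - 1 = (1 - n) c`, that is `c = (k + 1) / n`. For `k = 3` this
is `c = 4 / n`. Finally, for `Y = S_c F` each of the two fluxes `F^n Y^{(k)}` and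
`F^{n-1} Y F^{(k)}` is a multiple of `y Y`, and in the linearised equation the multiples cancel.
-/

open Filter Set
open scoped Topology

section ScalingGenerator

variable {𝕜 E : Type*} [NontriviallyNormedField 𝕜] [NormedAddCommGroup E] [NormedSpace 𝕜 E]
  {c : 𝕜} {f g : 𝕜 → E} {x : 𝕜}

/-- The infinitesimal generator of the scaling `f ↦ a ^ c • f (a⁻¹ • ·)` of weight `c`, that is,
its derivative with respect to `a` at `a = 1`, written out so that no power of `a` is needed. -/
noncomputable def scalingGenerator (c : 𝕜) (f : 𝕜 → E) (x : 𝕜) : E :=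
  c • f x - x • deriv f x

theorem scalingGenerator_congr (h : f =ᶠ[𝓝 x] g) :
    scalingGenerator c f x = scalingGenerator c g x := by
  simp only [scalingGenerator, h.eq_of_nhds, h.deriv_eq]

theorem scalingGenerator_const_smul (a : 𝕜) :
    scalingGenerator c (a • f) x = a • scalingGenerator c f x := by
  simp only [scalingGenerator, deriv_const_smul_field, Pi.smul_apply]
  module

theorem scalingGenerator_id_smul (hf : DifferentiableAt 𝕜 f x) :
    scalingGenerator c (fun z => z • f z) x = x • scalingGenerator (c - 1) f x := by
  simp only [scalingGenerator, deriv_fun_smul differentiableAt_fun_id hf, deriv_id'']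
  module

theorem deriv_scalingGenerator (hf : DifferentiableAt 𝕜 f x)
    (hf' : DifferentiableAt 𝕜 (deriv f) x) :
    deriv (scalingGenerator c f) x = scalingGenerator (c - 1) (deriv f) x := by
  have h : HasDerivAt (scalingGenerator c f) (c • deriv f x - (x • deriv (deriv f) x +
      (1 : 𝕜) • deriv f x)) x :=
    (hf.hasDerivAt.const_smul c).sub ((hasDerivAt_id' x).smul hf'.hasDerivAt)
  rw [h.deriv, scalingGenerator]
  module

theorem differentiableAt_iteratedDeriv_of_contDiffAt {k : ℕ} (hf : ContDiffAt 𝕜 (k + 1) f x) :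
    DifferentiableAt 𝕜 (iteratedDeriv k f) x := by
  have hk : (k : WithTop ℕ∞) < k + 1 := by exact_mod_cast k.lt_succ_self
  rw [← differentiableWithinAt_univ, ← iteratedDerivWithin_univ]
  refine hf.contDiffWithinAt.differentiableWithinAt_iteratedDerivWithin hk ?_
  simpa only [insert_eq_of_mem (mem_univ x)] using uniqueDiffOn_univ

theorem iteratedDeriv_scalingGenerator {k : ℕ} (hf : ContDiffAt 𝕜 (k + 1) f x) :
    iteratedDeriv k (scalingGenerator c f) x = scalingGenerator (c - k) (iteratedDeriv k f) x := by
  induction k generalizing x with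
  | zero => simp only [iteratedDeriv_zero, Nat.cast_zero, sub_zero]
  | succ k ih =>
    have hf_lower : ContDiffAt 𝕜 (k + 1) f x := by
      exact_mod_cast hf.of_le (by simp)
    have ih_nhds : iteratedDeriv k (scalingGenerator c f) =ᶠ[𝓝 x]
        scalingGenerator (c - k) (iteratedDeriv k f) :=
      (hf_lower.eventually (by exact_mod_cast WithTop.coe_ne_top)).mono fun _ => ih
    rw [iteratedDeriv_succ, ih_nhds.deriv_eq, deriv_scalingGenerator
      (differentiableAt_iteratedDeriv_of_contDiffAt hf_lower)
      (iteratedDeriv_succ (f := f) ▸ differentiableAt_iteratedDeriv_of_contDiffAt hf),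
      iteratedDeriv_succ, Nat.cast_succ, sub_sub]

end ScalingGenerator

theorem scalingGenerator_rpow_const {c p x : ℝ} {f : ℝ → ℝ} (hf : DifferentiableAt ℝ f x)
    (hx : f x ≠ 0) :
    scalingGenerator (p * c) (fun z => f z ^ p) x =
      p * f x ^ (p - 1) * scalingGenerator c f x := by
  have hpow : f x ^ p = f x ^ (p - 1) * f x := by
    rw [Real.rpow_sub_one hx, div_mul_cancel₀ _ hx]
  simp only [scalingGenerator, smul_eq_mul, deriv_rpow_const hf (Or.inl hx), hpow]
  ring

section Profile

variable {n β y : ℝ} {k : ℕ} {F : ℝ → ℝ}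

theorem rpow_sub_one_mul_iteratedDeriv_of_profile (hFy : F y ≠ 0)
    (hode : F y ^ n * iteratedDeriv k F y = β * y * F y) :
    F y ^ (n - 1) * iteratedDeriv k F y = β * y := by
  rw [Real.rpow_sub_one hFy, div_mul_eq_mul_div, hode, mul_div_cancel_right₀ _ hFy]

theorem iteratedDeriv_eq_of_profile (hpos : 0 < F y)
    (hode : F y ^ n * iteratedDeriv k F y = β * y * F y) :
    iteratedDeriv k F y = β * (y * F y ^ (1 - n)) := by
  have hinv : F y ^ (1 - n) * F y ^ (n - 1) = 1 := by
    rw [← Real.rpow_add hpos, sub_add_sub_cancel, sub_self, Real.rpow_zero]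
  linear_combination (-iteratedDeriv k F y) * hinv +
    F y ^ (1 - n) * rpow_sub_one_mul_iteratedDeriv_of_profile hpos.ne' hode

theorem rpow_mul_iteratedDeriv_scalingGenerator_of_profile (hn : n ≠ 0)
    (hF : ContDiffAt ℝ (k + 1) F y) (hpos : 0 < F y)
    (hode : ∀ᶠ z in 𝓝 y, F z ^ n * iteratedDeriv k F z = β * z * F z) :
    F y ^ n * iteratedDeriv k (scalingGenerator ((k + 1) / n) F) y =
      (1 - n) * β * y * scalingGenerator ((k + 1) / n) F y := by
  set c : ℝ := (k + 1) / n
  have hweight : c - k - 1 = (1 - n) * c := by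
    simp only [c]
    field_simp
    ring
  have hFdiff : DifferentiableAt ℝ F y := hF.differentiableAt (by simp)
  have hprofile : iteratedDeriv k F =ᶠ[𝓝 y] β • fun z => z • F z ^ (1 - n) := by
    filter_upwards [hode, hF.continuousAt.eventually_const_lt hpos] with z hz hz_pos
    exact iteratedDeriv_eq_of_profile hz_pos hz
  have hcancel : F y ^ n * F y ^ (1 - n - 1) = 1 := by
    rw [← Real.rpow_add hpos, sub_sub_cancel_left, add_neg_cancel, Real.rpow_zero]
  calc F y ^ n * iteratedDeriv k (scalingGenerator c F) y
      = F y ^ n * scalingGenerator (c - k) (iteratedDeriv k F) y := by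
        rw [iteratedDeriv_scalingGenerator hF]
    _ = F y ^ n * (β * (y * scalingGenerator ((1 - n) * c) (fun z => F z ^ (1 - n)) y)) := by
        rw [scalingGenerator_congr hprofile, scalingGenerator_const_smul,
          scalingGenerator_id_smul (hFdiff.rpow_const (Or.inl hpos.ne')), hweight,
          smul_eq_mul, smul_eq_mul]
    _ = F y ^ n * (β * (y * ((1 - n) * F y ^ (1 - n - 1) * scalingGenerator c F y))) := by
        rw [scalingGenerator_rpow_const hFdiff hpos.ne']
    _ = (1 - n) * β * y * scalingGenerator c F y := by
        linear_combination (1 - n) * β * y * scalingGenerator c F y * hcancel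

end Profile

theorem zero_eigenfunction_of_linearised_TFE_general
    (k : ℕ) (n β : ℝ) (hn : n ≠ 0) (I : Set ℝ) (hIopen : IsOpen I)
    (F : ℝ → ℝ) (hF : ContDiffOn ℝ (k + 1) F I) (hFpos : ∀ y ∈ I, 0 < F y)
    (hode : ∀ y ∈ I, F y ^ n * iteratedDeriv k F y = β * y * F y)
    (Y : ℝ → ℝ) (hY : Y = fun y => ((k + 1) / n) * F y - y * deriv F y) :
    (∀ y ∈ I, F y ^ n * iteratedDeriv k Y y = (1 - n) * β * y * Y y) ∧
    (∀ y ∈ I,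
      -(deriv (fun z => F z ^ n * iteratedDeriv k Y z) y)
        - n * deriv (fun z => F z ^ (n - 1) * Y z * iteratedDeriv k F z) y
        + β * deriv (fun z => z * Y z) y = 0) := by
  have hYgen : Y = scalingGenerator ((k + 1) / n) F := hY
  have hYode : ∀ y ∈ I, F y ^ n * iteratedDeriv k Y y = (1 - n) * β * y * Y y := by
    intro y hy
    have hI : I ∈ 𝓝 y := hIopen.mem_nhds hy
    rw [hYgen]
    exact rpow_mul_iteratedDeriv_scalingGenerator_of_profile hn (hF.contDiffAt hI) (hFpos y hy)
      (mem_of_superset hI hode)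
  have hflux_leading : EqOn (fun z => F z ^ n * iteratedDeriv k Y z)
      (fun z => (1 - n) * β * (z * Y z)) I :=
    fun z hz => (hYode z hz).trans (mul_assoc _ _ _)
  have hflux_mobility : EqOn (fun z => F z ^ (n - 1) * Y z * iteratedDeriv k F z)
      (fun z => β * (z * Y z)) I := fun z hz => by
    linear_combination
      Y z * rpow_sub_one_mul_iteratedDeriv_of_profile (hFpos z hz).ne' (hode z hz)
  refine ⟨hYode, fun y hy => ?_⟩
  rw [hflux_leading.deriv hIopen hy, hflux_mobility.deriv hIopen hy,
    deriv_const_mul_field, deriv_const_mul_field]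
  ring

/-- If `F > 0` solves the once-integrated similarity equation `F^n F''' = β y F` on an
open interval `I`, then `Y = (4/n)F - yF'` satisfies `F^n Y''' = (1-n) β y Y` on `I`;
in particular `Y` is a zero eigenfunction of the linearised thin-film operator:
`-(F^n Y''')' - n (F^{n-1} Y F''')' + β (yY)' = 0` on `I`. -/
theorem zero_eigenfunction_of_linearised_TFE
    (n β : ℝ) (hn : 0 < n) (I : Set ℝ) (hIopen : IsOpen I) (hIint : I.OrdConnected)
    (F : ℝ → ℝ) (hF : ContDiffOn ℝ 4 F I) (hFpos : ∀ y ∈ I, 0 < F y)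
    (hode : ∀ y ∈ I, F y ^ n * deriv (deriv (deriv F)) y = β * y * F y)
    (Y : ℝ → ℝ) (hY : Y = fun y => (4 / n) * F y - y * deriv F y) :
    (∀ y ∈ I, F y ^ n * deriv (deriv (deriv Y)) y = (1 - n) * β * y * Y y) ∧
    (∀ y ∈ I,
      -(deriv (fun z => F z ^ n * deriv (deriv (deriv Y)) z) y)
        - n * deriv (fun z => F z ^ (n - 1) * Y z * deriv (deriv (deriv F)) z) y
        + β * deriv (fun z => z * Y z) y = 0) := by
  have h := zero_eigenfunction_of_linearised_TFE_general 3 n β hn.ne' I hIopen F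
  simp only [iteratedDeriv_succ, iteratedDeriv_zero, Nat.cast_ofNat, three_add_one_eq_four] at h
  exact h hF hFpos hode Y hY
end

section
/- For every even natural number k there exists a nonzero real polynomial ψ of degree k + 2 with ψ(1) = ψ(−1) = 0 such that ((1 − y²)² ψ''')'(y) = k(k+1)(k+2)(k+3) ψ(y) for all y ∈ ℝ. Equivalently, for N = 1 and n = 1 the linearised thin-film operator A'(F)Y = −(F Y''')' with F(y) = (1−y²)²/120 possesses, for each even k, a polynomial eigenfunction of degree k+2 vanishing at the interface points ±1, with eigenvalue of modulus c₀ k(k+2)(k+1)(k+3) where c₀ = 1/120; for k = 0 the eigenfunction is ψ₀(y) = b₀(y² − 1) with eigenvalue 0. -/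
/-!
With `L ψ = (X² - 1) ψ''`, one has `((1 - X²)² ψ''')' = L (L ψ) - 2 L ψ` for every `ψ`. The `k`-th
derivative of `(X² - 1) ^ (k + 1)`, an antiderivative of a multiple of the Legendre polynomial of
degree `k + 1`, is an eigenvector of `L` with eigenvalue `μ = (k + 1) (k + 2)`, and
`μ (μ - 2) = k (k + 1) (k + 2) (k + 3)`.
-/

section ThinFilm

open Polynomial

theorem natDegree_iterate_derivative_eq {R : Type*} [Semiring R] [IsAddTorsionFree R]
    (p : R[X]) (j : ℕ) :
    (derivative^[j] p).natDegree = p.natDegree - j := by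
  induction j with
  | zero => rfl
  | succ j ih => rw [Function.iterate_succ_apply', natDegree_derivative, ih, Nat.sub_sub]

theorem mul_derivative_pow_self {R : Type*} [CommSemiring R] (p : R[X]) (n : ℕ) :
    p * derivative (p ^ n) = n * derivative p * p ^ n := by
  cases n with
  | zero => simp
  | succ n =>
    rw [derivative_pow_succ, C_add, C_1, map_natCast]
    push_cast
    ring

section Operators

variable (R : Type*) [CommRing R]

/-- The operator `ψ ↦ (X² - 1) ψ''`, up to sign the Gegenbauer operator of parameter
`-1/2`; the linearised thin-film operator is a quadratic polynomial in it. -/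
noncomputable def gegenbauerOperator : Module.End R R[X] :=
  LinearMap.mulLeft R (X ^ 2 - 1) ∘ₗ derivative ^ 2

/-- The linearised thin-film operator `ψ ↦ ((1 - X²)² ψ''')'` at the source-type profile, without
the factor `-1/120` in `A'(F)`. -/
noncomputable def linearizedThinFilm : Module.End R R[X] :=
  derivative ∘ₗ LinearMap.mulLeft R ((1 - X ^ 2) ^ 2) ∘ₗ derivative ^ 3

variable {R}

theorem gegenbauerOperator_apply (ψ : R[X]) :
    gegenbauerOperator R ψ = (X ^ 2 - 1) * derivative^[2] ψ := by
  simp only [gegenbauerOperator, LinearMap.comp_apply, LinearMap.mulLeft_apply,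
    Module.End.pow_apply]

theorem linearizedThinFilm_apply (ψ : R[X]) :
    linearizedThinFilm R ψ = derivative ((1 - X ^ 2) ^ 2 * derivative^[3] ψ) := by
  simp only [linearizedThinFilm, LinearMap.comp_apply, LinearMap.mulLeft_apply,
    Module.End.pow_apply]

theorem linearizedThinFilm_apply_eq_gegenbauerOperator (ψ : R[X]) :
    linearizedThinFilm R ψ =
      gegenbauerOperator R (gegenbauerOperator R ψ) - (2 : R) • gegenbauerOperator R ψ := by
  rw [linearizedThinFilm_apply, gegenbauerOperator_apply (gegenbauerOperator R ψ)]
  set φ : R[X] := gegenbauerOperator R ψ with hφ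
  have hflux : (1 - X ^ 2) ^ 2 * derivative^[3] ψ = (X ^ 2 - 1) * derivative φ - 2 * X * φ := by
    simp only [hφ, gegenbauerOperator_apply, derivative_mul, derivative_sub, derivative_X_sq,
      derivative_one, Function.iterate_succ_apply', Function.iterate_zero_apply, C_ofNat]
    ring
  rw [hflux, smul_eq_C_mul, C_ofNat]
  simp only [derivative_mul, derivative_sub, derivative_X_sq, derivative_X, derivative_one,
    derivative_ofNat, Function.iterate_succ_apply', Function.iterate_zero_apply, C_ofNat]
  ring

theorem linearizedThinFilm_apply_of_gegenbauerOperator_apply_eq {μ : R} {ψ : R[X]}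
    (h : gegenbauerOperator R ψ = μ • ψ) : linearizedThinFilm R ψ = (μ * (μ - 2)) • ψ := by
  rw [linearizedThinFilm_apply_eq_gegenbauerOperator, h, map_smul, h]
  module

end Operators

section IteratedDerivatives

variable {R : Type*} [CommRing R]

theorem X_sq_sub_one_mul_iterate_derivative_add_two {u : R[X]} {a b : R}
    (h : (X ^ 2 - 1) * derivative^[2] u = C a * X * derivative u + C b * u) (m : ℕ) :
    (X ^ 2 - 1) * derivative^[m + 2] u =
      C (a - 2 * m) * X * derivative^[m + 1] u +
        C (b + a * m - m * (m - 1)) * derivative^[m] u := by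
  have hleft : derivative^[m] ((X ^ 2 - 1) * derivative^[2] u) =
      (X ^ 2 - 1) * derivative^[m + 2] u + 2 * (m : R[X]) * X * derivative^[m + 1] u +
        (m : R[X]) * ((m : R[X]) - 1) * derivative^[m] u := by
    have hcast : ((m * (m - 1) : ℕ) : R[X]) = (m : R[X]) * ((m : R[X]) - 1) := by
      cases m <;> simp
    rw [sub_one_mul, iterate_derivative_sub, mul_comm, iterate_derivative_derivative_mul_X_sq,
      ← Function.iterate_add_apply, nsmul_eq_mul, nsmul_eq_mul, hcast, Nat.cast_mul, Nat.cast_ofNat]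
    ring
  have hright : derivative^[m] (C a * X * derivative u + C b * u) =
      C a * (X * derivative^[m + 1] u + (m : R[X]) * derivative^[m] u) +
        C b * derivative^[m] u := by
    rw [iterate_map_add, mul_assoc, iterate_derivative_C_mul, iterate_derivative_C_mul,
      mul_comm X, iterate_derivative_derivative_mul_X, nsmul_eq_mul, mul_comm X]
  have hderiv := congrArg derivative^[m] h
  rw [hleft, hright] at hderiv
  simp only [C_sub, C_add, C_mul, C_ofNat, C_1, map_natCast]
  linear_combination hderiv

theorem X_sq_sub_one_mul_iterate_derivative_two_pow (n : ℕ) :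
    (X ^ 2 - 1 : R[X]) * derivative^[2] ((X ^ 2 - 1) ^ n) =
      C (2 * (n - 1) : R) * X * derivative ((X ^ 2 - 1) ^ n) + C (2 * n : R) * (X ^ 2 - 1) ^ n := by
  set u : R[X] := (X ^ 2 - 1) ^ n with hu
  have hfirst : (X ^ 2 - 1) * derivative u = 2 * (n : R[X]) * X * u := by
    rw [hu, mul_derivative_pow_self, derivative_sub, derivative_X_sq, derivative_one, C_ofNat]
    ring
  have hderiv := congrArg derivative hfirst
  simp only [derivative_mul, derivative_sub, derivative_X_sq, derivative_one, derivative_X,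
    derivative_ofNat, derivative_natCast, C_ofNat] at hderiv
  simp only [C_sub, C_mul, C_ofNat, C_1, map_natCast, Function.iterate_succ_apply,
    Function.iterate_zero_apply]
  linear_combination hderiv

end IteratedDerivatives

section IntegratedLegendre

variable (R : Type*) [CommRing R]

/-- The integrated Legendre polynomial of degree `k + 2`, up to a factor: by Rodrigues' formula its
derivative is `2 ^ (k + 1) * (k + 1)!` times the Legendre polynomial of degree `k + 1`. Without that
normalisation it makes sense over any commutative ring. It serves as the eigenfunction. -/
noncomputable def integratedLegendre (k : ℕ) : R[X] :=
  derivative^[k] ((X ^ 2 - 1) ^ (k + 1))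

variable {R}

theorem natDegree_integratedLegendre [Nontrivial R] [IsAddTorsionFree R] (k : ℕ) :
    (integratedLegendre R k).natDegree = k + 2 := by
  have hmonic : (X ^ 2 - C 1 : R[X]).Monic := monic_X_pow_sub_C 1 two_ne_zero
  have hpow : ((X ^ 2 - 1 : R[X]) ^ (k + 1)).natDegree = (k + 1) * 2 := by
    rw [← C_1, hmonic.natDegree_pow, natDegree_X_pow_sub_C]
  rw [integratedLegendre, natDegree_iterate_derivative_eq, hpow]
  lia

theorem X_sq_sub_one_dvd_integratedLegendre (k : ℕ) :
    (X ^ 2 - 1 : R[X]) ∣ integratedLegendre R k := by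
  simpa [integratedLegendre] using pow_sub_dvd_iterate_derivative_pow (X ^ 2 - 1 : R[X]) (k + 1) k

theorem eval_integratedLegendre_eq_zero {x : R} (hx : x ^ 2 = 1) (k : ℕ) :
    (integratedLegendre R k).eval x = 0 :=
  eval_eq_zero_of_dvd_of_eval_eq_zero (X_sq_sub_one_dvd_integratedLegendre k) (by simp [hx])

theorem gegenbauerOperator_integratedLegendre (k : ℕ) :
    gegenbauerOperator R (integratedLegendre R k) =
      ((k + 1) * (k + 2) : R) • integratedLegendre R k := by
  have h := X_sq_sub_one_mul_iterate_derivative_add_two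
    (X_sq_sub_one_mul_iterate_derivative_two_pow (R := R) (k + 1)) k
  have hfst : (2 * ((k + 1 : ℕ) - 1) - 2 * k : R) = 0 := by
    push_cast
    ring
  have hsnd : (2 * (k + 1 : ℕ) + 2 * ((k + 1 : ℕ) - 1) * k - k * (k - 1) : R) =
      (k + 1) * (k + 2) := by
    push_cast
    ring
  rwa [hfst, hsnd, C_0, zero_mul, zero_mul, zero_add, add_comm k 2, Function.iterate_add_apply,
    ← integratedLegendre, ← gegenbauerOperator_apply, ← smul_eq_C_mul] at h

theorem linearizedThinFilm_integratedLegendre (k : ℕ) :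
    linearizedThinFilm R (integratedLegendre R k) =
      (k * (k + 1) * (k + 2) * (k + 3) : R) • integratedLegendre R k := by
  rw [linearizedThinFilm_apply_of_gegenbauerOperator_apply_eq
    (gegenbauerOperator_integratedLegendre k)]
  congr 1
  ring

end IntegratedLegendre

theorem polynomial_eigenfunctions_TFE_general {R : Type*} [CommRing R] [Nontrivial R]
    [IsAddTorsionFree R] (k : ℕ) :
    ∃ ψ : R[X], ψ ≠ 0 ∧ ψ.natDegree = k + 2 ∧ ψ.eval 1 = 0 ∧ ψ.eval (-1) = 0 ∧
      derivative ((1 - X ^ 2) ^ 2 * derivative^[3] ψ) =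
        (k * (k + 1) * (k + 2) * (k + 3) : R) • ψ := by
  have hdeg := natDegree_integratedLegendre (R := R) k
  refine ⟨integratedLegendre R k, ne_zero_of_natDegree_gt (n := 0) (by lia), hdeg,
    eval_integratedLegendre_eq_zero (one_pow 2) k, eval_integratedLegendre_eq_zero neg_one_sq k, ?_⟩
  rw [← linearizedThinFilm_apply, linearizedThinFilm_integratedLegendre]

end ThinFilm

/-- For every even `k` the linearised thin-film operator (case `N = 1`, `n = 1`) has a
polynomial eigenfunction of degree `k+2` vanishing at `±1`:
`((1-y²)² ψ''')'(y) = k(k+1)(k+2)(k+3) ψ(y)`. -/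
theorem polynomial_eigenfunctions_TFE (k : ℕ) (hk : Even k) :
    ∃ ψ : Polynomial ℝ, ψ ≠ 0 ∧ ψ.natDegree = k + 2 ∧
      ψ.eval 1 = 0 ∧ ψ.eval (-1) = 0 ∧
      ∀ y : ℝ,
        (Polynomial.derivative
          ((1 - Polynomial.X ^ 2) ^ 2 * (Polynomial.derivative^[3] ψ))).eval y
        = (k : ℝ) * (k + 1) * (k + 2) * (k + 3) * ψ.eval y := by
  obtain ⟨ψ, hψ, hdeg, h1, hneg, heq⟩ := polynomial_eigenfunctions_TFE_general (R := ℝ) k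
  exact ⟨ψ, hψ, hdeg, h1, hneg, fun y => by rw [heq, Polynomial.eval_smul, smul_eq_mul]⟩
end

section
/- Let a > 0, and on (−a, a) set f(y) = (a² − y²)²/120 and ρ(y) = (a² − y²)^{−1}. Define the linearised thin-film operator L Y = −(f Y''')' − (Y f''')' + (1/5)(y Y)'. Then for all Y, W ∈ C_c^∞((−a,a)) one has ∫_{−a}^{a} (LY)(y) W(y) ρ(y) dy = ∫_{−a}^{a} Y(y) (LW)(y) ρ(y) dy; i.e., for n = 1 the linearised operator is symmetric in the weighted space L²_ρ((−a,a)). -/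
open MeasureTheory

/-! Put `p = a² - y²`. Then `f = p² / 120` and `f''' = y / 5`, so the drift terms of `L` cancel and
`L Y = -(p² Y''')' / 120`. Multiplying by the weight `ρ = 1 / p` leaves
`(p² Y''')' / p = (p Y'')'' - p'' Y''`, in which `p'' = -2` is constant. Integrating by parts
against `W` gives `∫ (p Y'' W'' + p'' Y' W')`, which is symmetric in `Y` and `W`; the boundary terms
vanish because both `p` and `W` vanish at `±a`. -/

section IntegrationByParts

variable {b c : ℝ}

lemma integral_mul_deriv_deriv_eq_neg_integral_deriv_mul_deriv
    {A : Type*} [NormedRing A] [NormedAlgebra ℝ A] [CompleteSpace A] {u w : ℝ → A}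
    (hw : ContDiff ℝ 1 w) (hu : ContDiff ℝ 2 u) (hwb : w b = 0) (hwc : w c = 0) :
    ∫ y in b..c, w y * deriv (deriv u) y = -∫ y in b..c, deriv w y * deriv u y := by
  have hu' : ContDiff ℝ 1 (deriv u) := hu.deriv'
  rw [intervalIntegral.integral_mul_deriv_eq_deriv_mul
    (fun y _ ↦ (hw.differentiable one_ne_zero y).hasDerivAt)
    (fun y _ ↦ (hu'.differentiable one_ne_zero y).hasDerivAt)
    (hw.continuous_deriv_one.intervalIntegrable b c)
    (hu'.continuous_deriv_one.intervalIntegrable b c)]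
  simp [hwb, hwc]

lemma integral_mul_deriv_deriv_comm
    {A : Type*} [NormedCommRing A] [NormedAlgebra ℝ A] [CompleteSpace A] {u w : ℝ → A}
    (hw : ContDiff ℝ 2 w) (hu : ContDiff ℝ 2 u) (hwb : w b = 0) (hwc : w c = 0)
    (hub : u b = 0) (huc : u c = 0) :
    ∫ y in b..c, w y * deriv (deriv u) y = ∫ y in b..c, u y * deriv (deriv w) y := by
  rw [integral_mul_deriv_deriv_eq_neg_integral_deriv_mul_deriv (hw.of_le one_le_two) hu hwb hwc,
    integral_mul_deriv_deriv_eq_neg_integral_deriv_mul_deriv (hu.of_le one_le_two) hw hub huc]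
  simp only [mul_comm]

end IntegrationByParts

section WeightedDispersion

/-- The fourth-order operator `Z ↦ (p² Z''')' / p`. For `p = a² - y²` it is, up to a constant
factor, the linearised thin-film operator multiplied by the weight `1 / p`. At the zeros of `p` the
value is the junk value `0`. -/
noncomputable def weightedDispersion (p Z : ℝ → ℝ) (y : ℝ) : ℝ :=
  deriv (fun z ↦ p z ^ 2 * deriv (deriv (deriv Z)) z) y / p y

lemma deriv_sq_mul_deriv {𝕜 : Type*} [NontriviallyNormedField 𝕜] {p u : 𝕜 → 𝕜}
    (hp : ContDiff 𝕜 2 p) (hu : ContDiff 𝕜 2 u) (y : 𝕜) :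
    deriv (fun z ↦ p z ^ 2 * deriv u z) y =
      p y * (deriv (deriv fun z ↦ p z * u z) y - deriv (deriv p) y * u y) := by
  have hasDeriv {v : 𝕜 → 𝕜} (hv : ContDiff 𝕜 2 v) (z : 𝕜) : HasDerivAt v (deriv v z) z :=
    (hv.differentiable two_ne_zero z).hasDerivAt
  have hasDeriv' {v : 𝕜 → 𝕜} (hv : ContDiff 𝕜 2 v) :
      HasDerivAt (deriv v) (deriv (deriv v) y) y :=
    (hv.differentiable_deriv_two y).hasDerivAt
  have deriv_mul_eq : (deriv fun z ↦ p z * u z) = fun z ↦ deriv p z * u z + p z * deriv u z :=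
    funext fun z ↦ ((hasDeriv hp z).fun_mul (hasDeriv hu z)).deriv
  rw [deriv_mul_eq, (((hasDeriv hp y).fun_pow 2).fun_mul (hasDeriv' hu)).deriv,
    (((hasDeriv' hp).fun_mul (hasDeriv hu y)).fun_add
      ((hasDeriv hp y).fun_mul (hasDeriv' hu))).deriv]
  ring

lemma weightedDispersion_eq_sub {p Z : ℝ → ℝ} {y : ℝ} (hp : ContDiff ℝ 2 p)
    (hZ : ContDiff ℝ 4 Z) (hy : p y ≠ 0) :
    weightedDispersion p Z y =
      deriv (deriv fun z ↦ p z * deriv (deriv Z) z) y - deriv (deriv p) y * deriv (deriv Z) y := by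
  have hZ'' : ContDiff ℝ 2 (deriv (deriv Z)) := ContDiff.iterate_deriv' 2 2 hZ
  rw [weightedDispersion, deriv_sq_mul_deriv hp hZ'', mul_div_cancel_left₀ _ hy]

variable {p Y W : ℝ → ℝ} {b c k : ℝ}

lemma integral_weightedDispersion_mul
    (hbc : b ≤ c) (hp : ContDiff ℝ 2 p) (hp'' : ∀ y, deriv (deriv p) y = k) (hpb : p b = 0)
    (hpc : p c = 0) (hp_ne : ∀ y ∈ Set.Ioo b c, p y ≠ 0)
    (hY : ContDiff ℝ 4 Y) (hW : ContDiff ℝ 2 W) (hWb : W b = 0) (hWc : W c = 0) :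
    ∫ y in Set.Ioo b c, weightedDispersion p Y y * W y =
      (∫ y in b..c, p y * (deriv (deriv Y) y * deriv (deriv W) y)) +
        k * ∫ y in b..c, deriv Y y * deriv W y := by
  have hY'' : ContDiff ℝ 2 (deriv (deriv Y)) := ContDiff.iterate_deriv' 2 2 hY
  have hpY'' : ContDiff ℝ 2 fun y ↦ p y * deriv (deriv Y) y := hp.mul hY''
  have continuous_deriv_deriv : Continuous (deriv (deriv fun y ↦ p y * deriv (deriv Y) y)) :=
    (ContDiff.iterate_deriv' 0 2 hpY'').continuous
  calc ∫ y in Set.Ioo b c, weightedDispersion p Y y * W y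
    _ = ∫ y in b..c, (W y * deriv (deriv fun z ↦ p z * deriv (deriv Y) z) y -
          k * (W y * deriv (deriv Y) y)) := by
      rw [intervalIntegral.integral_of_le hbc, integral_Ioc_eq_integral_Ioo]
      refine setIntegral_congr_fun measurableSet_Ioo fun y hy ↦ ?_
      simp only [weightedDispersion_eq_sub hp hY (hp_ne y hy), hp'']
      ring
    _ = (∫ y in b..c, W y * deriv (deriv fun z ↦ p z * deriv (deriv Y) z) y) -
          k * ∫ y in b..c, W y * deriv (deriv Y) y := by
      rw [intervalIntegral.integral_sub, intervalIntegral.integral_const_mul]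
      · exact (hW.continuous.mul continuous_deriv_deriv).intervalIntegrable b c
      · exact ((hW.continuous.mul hY''.continuous).const_mul k).intervalIntegrable b c
    _ = (∫ y in b..c, p y * deriv (deriv Y) y * deriv (deriv W) y) +
          k * ∫ y in b..c, deriv W y * deriv Y y := by
      rw [integral_mul_deriv_deriv_comm hW hpY'' hWb hWc (by simp [hpb]) (by simp [hpc]),
        integral_mul_deriv_deriv_eq_neg_integral_deriv_mul_deriv (hW.of_le one_le_two)
          (hY.of_le (by norm_num)) hWb hWc]
      ring
    _ = _ := by simp only [mul_assoc, mul_comm (deriv W _)]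

lemma integral_weightedDispersion_mul_comm
    (hbc : b ≤ c) (hp : ContDiff ℝ 2 p) (hp'' : ∀ y, deriv (deriv p) y = k) (hpb : p b = 0)
    (hpc : p c = 0) (hp_ne : ∀ y ∈ Set.Ioo b c, p y ≠ 0)
    (hY : ContDiff ℝ 4 Y) (hYb : Y b = 0) (hYc : Y c = 0)
    (hW : ContDiff ℝ 4 W) (hWb : W b = 0) (hWc : W c = 0) :
    ∫ y in Set.Ioo b c, weightedDispersion p Y y * W y =
      ∫ y in Set.Ioo b c, weightedDispersion p W y * Y y := by
  rw [integral_weightedDispersion_mul hbc hp hp'' hpb hpc hp_ne hY (hW.of_le (by norm_num)) hWb hWc,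
    integral_weightedDispersion_mul hbc hp hp'' hpb hpc hp_ne hW (hY.of_le (by norm_num)) hYb hYc]
  simp only [mul_comm (deriv W _), mul_comm (deriv (deriv W) _)]

end WeightedDispersion

section ThinFilm

/-- The Fréchet derivative at `f` of the similarity operator `A(f) = -(f f''')' + β (y f)'` of the
one-dimensional thin film equation `u_t = -(u u_xxx)_x`. -/
noncomputable def thinFilmLinearisation (β : ℝ) (f Z : ℝ → ℝ) (y : ℝ) : ℝ :=
  -(deriv (fun z ↦ f z * deriv (deriv (deriv Z)) z) y)
    - deriv (fun z ↦ Z z * deriv (deriv (deriv f)) z) y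
    + β * deriv (fun z ↦ z * Z z) y

lemma thinFilmLinearisation_eq_neg_deriv {β : ℝ} {f : ℝ → ℝ}
    (hf : ∀ y, deriv (deriv (deriv f)) y = β * y) (Z : ℝ → ℝ) (y : ℝ) :
    thinFilmLinearisation β f Z y = -deriv (fun z ↦ f z * deriv (deriv (deriv Z)) z) y := by
  have drift : (fun z ↦ Z z * (β * z)) = fun z ↦ β * (z * Z z) := by
    funext z
    ring
  simp only [thinFilmLinearisation, hf, drift, deriv_const_mul_field]
  ring

lemma deriv_deriv_deriv_sub_sq_sq_div (r d y : ℝ) :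
    deriv (deriv (deriv fun z : ℝ ↦ (r - z ^ 2) ^ 2 / d)) y = 24 / d * y := by
  have deriv_eq : (deriv fun z : ℝ ↦ (r - z ^ 2) ^ 2 / d) =
      fun z ↦ (4 * z ^ 3 - 4 * r * z) / d := by
    funext z
    simp [deriv_fun_pow]
    ring
  have deriv_deriv_eq : (deriv fun z : ℝ ↦ (4 * z ^ 3 - 4 * r * z) / d) =
      fun z ↦ (12 * z ^ 2 - 4 * r) / d := by
    funext z
    rw [deriv_div_const, deriv_fun_sub (by fun_prop) (by fun_prop)]
    simp
    ring
  rw [deriv_eq, deriv_deriv_eq]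
  simp
  ring

lemma thinFilmLinearisation_div_eq_weightedDispersion (a : ℝ) (Z : ℝ → ℝ) (y : ℝ) :
    thinFilmLinearisation (1 / 5) (fun z ↦ (a ^ 2 - z ^ 2) ^ 2 / 120) Z y / (a ^ 2 - y ^ 2) =
      -(1 / 120) * weightedDispersion (fun z ↦ a ^ 2 - z ^ 2) Z y := by
  have hf''' (y : ℝ) :
      deriv (deriv (deriv fun z : ℝ ↦ (a ^ 2 - z ^ 2) ^ 2 / 120)) y = 1 / 5 * y := by
    rw [deriv_deriv_deriv_sub_sq_sq_div]
    norm_num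
  rw [thinFilmLinearisation_eq_neg_deriv hf''', weightedDispersion]
  simp only [div_mul_eq_mul_div, deriv_div_const]
  ring

end ThinFilm

theorem linearised_TFE_symmetric_n_eq_one_general
    (a : ℝ) (ha : 0 < a) (f ρ : ℝ → ℝ)
    (hf : ∀ y, f y = (a ^ 2 - y ^ 2) ^ 2 / 120)
    (hρ : ∀ y, ρ y = (a ^ 2 - y ^ 2)⁻¹)
    (L : (ℝ → ℝ) → ℝ → ℝ)
    (hL : ∀ Z y, L Z y =
      -(deriv (fun z => f z * deriv (deriv (deriv Z)) z) y)
        - deriv (fun z => Z z * deriv (deriv (deriv f)) z) y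
        + (1 / 5) * deriv (fun z => z * Z z) y)
    (Y W : ℝ → ℝ)
    (hY : ContDiff ℝ 4 Y) (hY_left : Y (-a) = 0) (hY_right : Y a = 0)
    (hW : ContDiff ℝ 4 W) (hW_left : W (-a) = 0) (hW_right : W a = 0) :
    ∫ y in Set.Ioo (-a) a, L Y y * W y * ρ y
      = ∫ y in Set.Ioo (-a) a, Y y * L W y * ρ y := by
  obtain rfl : f = fun y ↦ (a ^ 2 - y ^ 2) ^ 2 / 120 := funext hf
  obtain rfl : L = thinFilmLinearisation (1 / 5) _ := funext₂ hL
  set L := thinFilmLinearisation (1 / 5) fun y ↦ (a ^ 2 - y ^ 2) ^ 2 / 120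
  let p (y : ℝ) : ℝ := a ^ 2 - y ^ 2
  have weighted (Z : ℝ → ℝ) (y : ℝ) : L Z y * ρ y = -(1 / 120) * weightedDispersion p Z y := by
    rw [← thinFilmLinearisation_div_eq_weightedDispersion, hρ, div_eq_mul_inv]
  have p_ne_zero (y : ℝ) (hy : y ∈ Set.Ioo (-a) a) : p y ≠ 0 :=
    (sub_pos.2 (sq_lt_sq' hy.1 hy.2)).ne'
  calc ∫ y in Set.Ioo (-a) a, L Y y * W y * ρ y
    _ = -(1 / 120) * ∫ y in Set.Ioo (-a) a, weightedDispersion p Y y * W y := by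
      simp only [mul_right_comm (L Y _), weighted, mul_assoc, integral_const_mul]
    _ = -(1 / 120) * ∫ y in Set.Ioo (-a) a, weightedDispersion p W y * Y y := by
      rw [integral_weightedDispersion_mul_comm (neg_le_self ha.le) (by fun_prop)
        (k := -2) (by simp [p]) (by simp [p]) (by simp [p]) p_ne_zero
        hY hY_left hY_right hW hW_left hW_right]
    _ = ∫ y in Set.Ioo (-a) a, Y y * L W y * ρ y := by
      simp only [mul_comm (Y _), mul_right_comm (L W _), weighted, mul_assoc, integral_const_mul]

/-- For `n = 1` the linearised thin-film operator
`L Y = -(f Y''')' - (Y f''')' + (1/5)(yY)'`, with `f(y) = (a²-y²)²/120`, is symmetric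
in the weighted space `L²_ρ((-a,a))` with weight `ρ(y) = (a²-y²)⁻¹`. -/
theorem linearised_TFE_symmetric_n_eq_one
    (a : ℝ) (ha : 0 < a) (f ρ : ℝ → ℝ)
    (hf : ∀ y, f y = (a ^ 2 - y ^ 2) ^ 2 / 120)
    (hρ : ∀ y, ρ y = (a ^ 2 - y ^ 2)⁻¹)
    (L : (ℝ → ℝ) → ℝ → ℝ)
    (hL : ∀ Z y, L Z y =
      -(deriv (fun z => f z * deriv (deriv (deriv Z)) z) y)
        - deriv (fun z => Z z * deriv (deriv (deriv f)) z) y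
        + (1 / 5) * deriv (fun z => z * Z z) y)
    (Y W : ℝ → ℝ)
    (hYsm : ContDiff ℝ (⊤ : ℕ∞) Y) (hYcs : HasCompactSupport Y)
    (hYsupp : tsupport Y ⊆ Set.Ioo (-a) a)
    (hWsm : ContDiff ℝ (⊤ : ℕ∞) W) (hWcs : HasCompactSupport W)
    (hWsupp : tsupport W ⊆ Set.Ioo (-a) a) :
    ∫ y in Set.Ioo (-a) a, L Y y * W y * ρ y
      = ∫ y in Set.Ioo (-a) a, Y y * L W y * ρ y := by
  have eq_zero {Z : ℝ → ℝ} {y : ℝ} (hZ : tsupport Z ⊆ Set.Ioo (-a) a) (hy : y ∉ Set.Ioo (-a) a) :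
      Z y = 0 := image_eq_zero_of_notMem_tsupport fun h ↦ hy (hZ h)
  exact linearised_TFE_symmetric_n_eq_one_general a ha f ρ hf hρ L hL Y W
    (contDiff_infty.1 hYsm 4) (eq_zero hYsupp (by simp)) (eq_zero hYsupp (by simp))
    (contDiff_infty.1 hWsm 4) (eq_zero hWsupp (by simp)) (eq_zero hWsupp (by simp))
end

section
/- Consider the equation φ'''(s) + 6φ''(s) + 11φ'(s) + 6φ(s) + sgn(φ(s)) = 0 (the oscillatory-component equation with n = 1, μ = 3). There exists a nonconstant periodic solution φ : ℝ → ℝ of changing sign — φ of class C² with φ'' locally absolutely continuous, satisfying the equation at every s with φ(s) ≠ 0 — whose minimal period equals T = −2 ln((3−√5)/2) = 1.9248...; moreover this periodic solution is unique up to translations of s. -/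
open MeasureTheory intervalIntegral

/-- A solution of the oscillatory-component equation with `n = 1`, `μ = 3`:
`φ` is `C²`, `φ''` is locally absolutely continuous (expressed via the fundamental
theorem of calculus for its a.e. derivative `φ'''`), and
`φ''' + 6φ'' + 11φ' + 6φ + sgn(φ) = 0` holds wherever `φ ≠ 0`. -/
def IsOscSolOne (φ : ℝ → ℝ) : Prop :=
  ContDiff ℝ 2 φ ∧
  (∀ a b : ℝ, deriv (deriv φ) b - deriv (deriv φ) a
      = ∫ s in a..b, deriv (deriv (deriv φ)) s) ∧
  (∀ s : ℝ, φ s ≠ 0 →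
    deriv (deriv (deriv φ)) s + 6 * deriv (deriv φ) s + 11 * deriv φ s
      + 6 * φ s + Real.sign (φ s) = 0)

/-!
The substitution `F x = x ^ 3 * ψ (log x)` turns the equation into the relay equation
`F''' = -sgn F` on `(0, ∞)`, and a periodic `ψ` into an `F` which is homogeneous of degree three
under `x ↦ L x` for some `L > 1`. The energy `F F'' - F' ^ 2 / 2` has derivative `-|F|` and is
homogeneous of degree four, hence negative, so that all zeros of `F` are simple. Between
consecutive zeros `c < d` the function `F` is a cubic, determined up to scaling by the ratio
`F''(c) / (d - c)`. Along consecutive arcs this ratio obeys a contracting recursion; as every arc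
has infinitely many predecessors, it equals the fixed point. Therefore the arc lengths, and then
the zeros themselves, which can accumulate only at `0`, form a geometric progression of ratio
`(3 - √5) / 2`. Up to a dilation, that is, a translation of `ψ`, this leaves a single `F`. The same
cubic arc, continued antiperiodically, provides the solution.
-/

open Set Filter Topology

section RealAnalysis

variable {f g : ℝ → ℝ} {f' a b x : ℝ}

theorem hasDerivAt_mul_of_eq_zero (hf : HasDerivAt f f' x) (hx : f x = 0)
    (hg : ContinuousAt g x) : HasDerivAt (f * g) (f' * g x) x := by
  rw [hasDerivAt_iff_tendsto_slope] at hf ⊢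
  refine (hf.mul (hg.tendsto.mono_left nhdsWithin_le_nhds)).congr fun y => ?_
  simp only [slope_def_field, Pi.mul_apply, hx]
  ring

theorem eventually_nhdsGT_pos_of_hasDerivAt (hf : HasDerivAt f f' x) (hx : f x = 0)
    (hf' : 0 < f') : ∀ᶠ y in 𝓝[>] x, 0 < f y := by
  filter_upwards [nhdsWithin_le_nhds
    (eventually_nhdsWithin_sign_eq_of_deriv_pos (hf.deriv ▸ hf') hx), self_mem_nhdsWithin]
    with y hy hxy
  rwa [sign_pos (sub_pos.2 hxy), sign_eq_one_iff] at hy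

theorem eventually_nhdsLT_pos_of_hasDerivAt (hf : HasDerivAt f f' x) (hx : f x = 0)
    (hf' : f' < 0) : ∀ᶠ y in 𝓝[<] x, 0 < f y := by
  filter_upwards [nhdsWithin_le_nhds
    (eventually_nhdsWithin_sign_eq_of_deriv_neg (hf.deriv ▸ hf') hx), self_mem_nhdsWithin]
    with y hy hxy
  rwa [sign_pos (sub_pos.2 hxy), sign_eq_one_iff] at hy

theorem exists_first_zero (hf : ContinuousOn f (Icc a b)) (hab : a < b)
    (ha : ∀ᶠ x in 𝓝[>] a, 0 < f x) (hb : f b ≤ 0) :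
    ∃ d ∈ Ioc a b, f d = 0 ∧ ∀ x ∈ Ioo a d, 0 < f x := by
  obtain ⟨c, hac, hpos⟩ := mem_nhdsGT_iff_exists_Ioc_subset.1 ha
  have hcb : c < b := by
    by_contra! hbc
    exact (hpos ⟨hab, hbc⟩).not_ge hb
  have hf' : ContinuousOn f (Icc c b) := hf.mono (Icc_subset_Icc_left (le_of_lt hac))
  have hK : IsCompact (Icc c b ∩ f ⁻¹' Iic 0) :=
    isCompact_Icc.of_isClosed_subset (hf'.preimage_isClosed_of_isClosed isClosed_Icc isClosed_Iic)
      inter_subset_left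
  obtain ⟨d, ⟨⟨hcd, hdb⟩, hd⟩, hmin⟩ := hK.exists_isLeast ⟨b, ⟨hcb.le, le_rfl⟩, hb⟩
  obtain ⟨z, ⟨hcz, hzd⟩, hz⟩ := intermediate_value_Icc' hcd (hf'.mono (Icc_subset_Icc_right hdb))
    ⟨hd, (hpos ⟨hac, le_rfl⟩).le⟩
  have hzd' : z = d := hzd.antisymm (hmin ⟨⟨hcz, hzd.trans hdb⟩, hz.le⟩)
  refine ⟨d, ⟨lt_of_lt_of_le hac hcd, hdb⟩, hzd' ▸ hz, fun x hx => ?_⟩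
  rcases le_or_gt x c with hxc | hcx
  · exact hpos ⟨hx.1, hxc⟩
  · by_contra! hfx
    exact (hmin ⟨⟨hcx.le, hx.2.le.trans hdb⟩, hfx⟩).not_gt hx.2

theorem exists_last_zero (hf : ContinuousOn f (Icc a b)) (hab : a < b)
    (hb : ∀ᶠ x in 𝓝[<] b, 0 < f x) (ha : f a ≤ 0) :
    ∃ d ∈ Ico a b, f d = 0 ∧ ∀ x ∈ Ioo d b, 0 < f x := by
  obtain ⟨d, hd, hd0, hpos⟩ := exists_first_zero (f := fun x => f (-x)) (a := -b) (b := -a)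
    (hf.comp continuousOn_neg fun x hx => ⟨by linarith [hx.2], by linarith [hx.1]⟩)
    (neg_lt_neg hab) (tendsto_neg_nhdsGT_neg.eventually hb) (by simpa using ha)
  refine ⟨-d, ⟨by linarith [hd.2], by linarith [hd.1]⟩, hd0, fun x hx => ?_⟩
  simpa using hpos (-x) ⟨by linarith [hx.2], by linarith [hx.1]⟩

theorem eqOn_Icc_of_hasDerivAt_eq {f' : ℝ → ℝ} (hf : ContinuousOn f (Icc a b))
    (hg : ContinuousOn g (Icc a b)) (hf' : ∀ x ∈ Ioo a b, HasDerivAt f (f' x) x)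
    (hg' : ∀ x ∈ Ioo a b, HasDerivAt g (f' x) x) (hab : f a = g a) : EqOn f g (Icc a b) := by
  intro x hx
  rcases hx.1.eq_or_lt with rfl | hax
  · exact hab
  have hsub : Ioo a x ⊆ Ioo a b := Ioo_subset_Ioo_right hx.2
  obtain ⟨z, -, hz⟩ := exists_hasDerivAt_eq_slope (f - g) (fun y => f' y - f' y) hax
    ((hf.sub hg).mono (Icc_subset_Icc_right hx.2))
    fun y hy => (hf' y (hsub hy)).sub (hg' y (hsub hy))
  rw [sub_self, eq_comm, div_eq_zero_iff, or_iff_left (sub_pos.2 hax).ne'] at hz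
  simpa [hab, sub_eq_zero] using hz

theorem homogeneous_of_hasDerivAt {L : ℝ} {k : ℕ} {f' : ℝ → ℝ} (hL : 0 < L)
    (hf : ∀ x, 0 < x → HasDerivAt f (f' x) x)
    (hfL : ∀ x, 0 < x → f (L * x) = L ^ (k + 1) * f x) (hx : 0 < x) :
    f' (L * x) = L ^ k * f' x := by
  have hcomp : HasDerivAt (fun y => f (L * y)) (f' (L * x) * L) x :=
    ((hf (L * x) (mul_pos hL hx)).comp x ((hasDerivAt_id' x).const_mul L)).congr_deriv (by ring)
  have hmul : HasDerivAt (fun y => f (L * y)) (L ^ (k + 1) * f' x) x :=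
    ((hf x hx).const_mul _).congr_of_eventuallyEq <| by
      filter_upwards [Ioi_mem_nhds hx] with y hy using hfL y hy
  refine mul_right_cancel₀ hL.ne' ((hcomp.unique hmul).trans ?_)
  ring

theorem eq_of_periodic_of_eqOn_Ici {α : Type*} {f g : ℝ → α} {P Q : ℝ} (hP : 0 < P) (hQ : 0 < Q)
    (hf : Function.Periodic f P) (hg : Function.Periodic g Q) (hfg : EqOn f g (Ici a)) :
    f = g := by
  ext t
  obtain ⟨m, hm⟩ := exists_nat_ge ((a - t) / P)
  obtain ⟨n, hn⟩ := exists_nat_ge ((a - t) / Q)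
  rw [div_le_iff₀ hP] at hm
  rw [div_le_iff₀ hQ] at hn
  calc f t = f (t + m * P) := (hf.nat_mul m t).symm
    _ = g (t + m * P) := hfg (by simp only [mem_Ici]; linarith)
    _ = g (t + m * P + n * Q) := (hg.nat_mul n _).symm
    _ = f (t + m * P + n * Q) :=
      (hfg (by simp only [mem_Ici]; nlinarith [n.cast_nonneg (α := ℝ)])).symm
    _ = f (t + n * Q) := by rw [add_right_comm]; exact hf.nat_mul m _
    _ = g (t + n * Q) := hfg (by simp only [mem_Ici]; linarith)
    _ = g t := hg.nat_mul n t

end RealAnalysis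

/-! ### Antiperiodic extension -/

/-- The function on the line which is antiperiodic with antiperiod `τ` and agrees with `u` on
`[0, τ)`. -/
noncomputable def antiperiodicExt (τ : ℝ) (u : ℝ → ℝ) (s : ℝ) : ℝ :=
  (-1) ^ ⌊s / τ⌋ * u (s - ⌊s / τ⌋ * τ)

section AntiperiodicExt

variable {τ s : ℝ} {u : ℝ → ℝ}

theorem antiperiodic_antiperiodicExt (hτ : τ ≠ 0) :
    Function.Antiperiodic (antiperiodicExt τ u) τ := by
  intro s
  have hfloor : ⌊(s + τ) / τ⌋ = ⌊s / τ⌋ + 1 := by rw [add_div, div_self hτ, Int.floor_add_one]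
  rw [antiperiodicExt, antiperiodicExt, hfloor, zpow_add_one₀ (by norm_num), Int.cast_add,
    Int.cast_one, show s + τ - (⌊s / τ⌋ + 1) * τ = s - ⌊s / τ⌋ * τ by ring]
  ring

theorem antiperiodicExt_eq_of_mem_Ico (hτ : 0 < τ) {n : ℤ} (hs : s ∈ Ico (n * τ) ((n + 1) * τ)) :
    antiperiodicExt τ u s = (-1) ^ n * u (s - n * τ) := by
  have hfloor : ⌊s / τ⌋ = n := Int.floor_eq_iff.2 ⟨(le_div_iff₀ hτ).2 hs.1, (div_lt_iff₀ hτ).2 hs.2⟩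
  rw [antiperiodicExt, hfloor]

theorem antiperiodicExt_eq_of_mem_Icc (hτ : 0 < τ) (hu : u τ = -u 0) {n : ℤ}
    (hs : s ∈ Icc (n * τ) ((n + 1) * τ)) :
    antiperiodicExt τ u s = (-1) ^ n * u (s - n * τ) := by
  rcases hs.2.eq_or_lt with rfl | hlt
  · rw [antiperiodicExt_eq_of_mem_Ico hτ (n := n + 1) ⟨by simp, by push_cast; linarith⟩,
      zpow_add_one₀ (by norm_num), show (n + 1) * τ - n * τ = τ by ring, hu]
    push_cast
    ring_nf
  · exact antiperiodicExt_eq_of_mem_Ico hτ ⟨hs.1, hlt⟩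

theorem antiperiodicExt_eq_zero_iff (hτ : 0 < τ) (hu₀ : u 0 = 0) (hu : ∀ t ∈ Ioo 0 τ, u t ≠ 0) :
    antiperiodicExt τ u s = 0 ↔ s ∈ range fun n : ℤ => n * τ := by
  have h₀ := Int.sub_floor_div_mul_nonneg s hτ
  have h₁ := Int.sub_floor_div_mul_lt s hτ
  constructor
  · intro hs
    refine ⟨⌊s / τ⌋, (sub_eq_zero.1 (h₀.antisymm' (not_lt.1 fun hpos => ?_))).symm⟩
    exact mul_ne_zero (zpow_ne_zero _ (by norm_num)) (hu _ ⟨hpos, h₁⟩) hs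
  · rintro ⟨n, rfl⟩
    simp [antiperiodicExt, hτ.ne', hu₀]

theorem two_mul_le_of_periodic_antiperiodicExt (hτ : 0 < τ) (hu₀ : u 0 = 0)
    (hu : ∀ t ∈ Ioo 0 τ, u t ≠ 0) {T : ℝ} (hT : 0 < T)
    (hper : Function.Periodic (antiperiodicExt τ u) T) : 2 * τ ≤ T := by
  have hzero (s : ℝ) := antiperiodicExt_eq_zero_iff (s := s) hτ hu₀ hu
  obtain ⟨n, rfl⟩ : ∃ n : ℤ, n * τ = T :=
    (hzero T).1 (by rw [hper.eq, hzero]; exact ⟨0, by simp⟩)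
  have hn : 0 < n := by exact_mod_cast pos_of_mul_pos_left hT hτ.le
  have hn₁ : n ≠ 1 := by
    rintro rfl
    have hhalf := hper (τ / 2)
    rw [Int.cast_one, one_mul, antiperiodic_antiperiodicExt hτ.ne', neg_eq_self,
      hzero] at hhalf
    obtain ⟨k, hk⟩ := hhalf
    have hk2 : (2 * k : ℝ) = 1 := mul_right_cancel₀ hτ.ne' (by linear_combination 2 * hk)
    have : 2 * k = 1 := by exact_mod_cast hk2
    lia
  have : (2 : ℝ) ≤ n := by exact_mod_cast (by lia : 2 ≤ n)
  exact mul_le_mul_of_nonneg_right this hτ.le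

theorem exists_Icc_mem_nhdsGE_nhdsLE (hτ : 0 < τ) (s : ℝ) :
    (∃ n : ℤ, Icc (n * τ) ((n + 1) * τ) ∈ 𝓝[≥] s) ∧
      ∃ n : ℤ, Icc (n * τ) ((n + 1) * τ) ∈ 𝓝[≤] s := by
  refine ⟨⟨⌊s / τ⌋, Icc_mem_nhdsGE_of_mem ?_⟩, ⟨⌈s / τ⌉ - 1, Icc_mem_nhdsLE_of_mem ?_⟩⟩
  · exact ⟨(le_div_iff₀ hτ).1 (Int.floor_le _), (div_lt_iff₀ hτ).1 (Int.lt_floor_add_one _)⟩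
  · rw [mem_Ioc, ← lt_div_iff₀ hτ, ← div_le_iff₀ hτ, Int.cast_sub, Int.cast_one, sub_add_cancel]
    exact ⟨by linarith [Int.ceil_lt_add_one (s / τ)], Int.le_ceil _⟩

theorem continuous_antiperiodicExt (hτ : 0 < τ) (hu : Continuous u) (hu₀ : u τ = -u 0) :
    Continuous (antiperiodicExt τ u) := by
  have hpiece (n : ℤ) : ContinuousOn (antiperiodicExt τ u) (Icc (n * τ) ((n + 1) * τ)) :=
    ContinuousOn.congr (f := fun s => (-1) ^ n * u (s - n * τ)) (by fun_prop)
      fun s => antiperiodicExt_eq_of_mem_Icc hτ hu₀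
  refine continuous_iff_continuousAt.2 fun s => continuousAt_iff_continuous_left_right.2 ?_
  obtain ⟨⟨n, hn⟩, ⟨m, hm⟩⟩ := exists_Icc_mem_nhdsGE_nhdsLE hτ s
  exact ⟨(hpiece m s (mem_of_mem_nhdsWithin self_mem_Iic hm)).mono_of_mem_nhdsWithin hm,
    (hpiece n s (mem_of_mem_nhdsWithin self_mem_Ici hn)).mono_of_mem_nhdsWithin hn⟩

theorem hasDerivAt_antiperiodicExt (hτ : 0 < τ) (hu : Differentiable ℝ u) (hu₀ : u τ = -u 0)
    (hu₁ : deriv u τ = -deriv u 0) (s : ℝ) :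
    HasDerivAt (antiperiodicExt τ u) (antiperiodicExt τ (deriv u) s) s := by
  have hpiece (n : ℤ) (hs : s ∈ Icc (n * τ) ((n + 1) * τ)) :
      HasDerivWithinAt (antiperiodicExt τ u) (antiperiodicExt τ (deriv u) s)
        (Icc (n * τ) ((n + 1) * τ)) s := by
    rw [antiperiodicExt_eq_of_mem_Icc hτ hu₁ hs]
    exact ((((hu _).hasDerivAt.comp_sub_const s (n * τ)).const_mul _).hasDerivWithinAt).congr_of_mem
      (fun t => antiperiodicExt_eq_of_mem_Icc hτ hu₀) hs
  obtain ⟨⟨n, hn⟩, ⟨m, hm⟩⟩ := exists_Icc_mem_nhdsGE_nhdsLE hτ s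
  rw [← hasDerivWithinAt_univ, ← Iic_union_Ici (a := s)]
  exact ((hpiece m (mem_of_mem_nhdsWithin self_mem_Iic hm)).mono_of_mem_nhdsWithin hm).union
    ((hpiece n (mem_of_mem_nhdsWithin self_mem_Ici hn)).mono_of_mem_nhdsWithin hn)

theorem hasDerivAt_antiperiodicExt_of_notMem_range (hτ : 0 < τ) (hu : Differentiable ℝ u)
    (hs : s ∉ range fun n : ℤ => n * τ) :
    HasDerivAt (antiperiodicExt τ u) (antiperiodicExt τ (deriv u) s) s := by
  have h₀ := Int.sub_floor_div_mul_nonneg s hτ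
  have h₁ := Int.sub_floor_div_mul_lt s hτ
  set n := ⌊s / τ⌋ with hn
  have hmem : s ∈ Ioo (n * τ) ((n + 1) * τ) :=
    ⟨(sub_nonneg.1 h₀).lt_of_ne fun h => hs ⟨n, h⟩, by linarith⟩
  rw [antiperiodicExt, ← hn]
  refine (((hu _).hasDerivAt.comp_sub_const s (n * τ)).const_mul _).congr_of_eventuallyEq ?_
  filter_upwards [Ioo_mem_nhds hmem.1 hmem.2] with t ht
  exact antiperiodicExt_eq_of_mem_Ico hτ (Ioo_subset_Ico_self ht)

theorem contDiff_antiperiodicExt (hτ : 0 < τ) {n : ℕ} (hu : ContDiff ℝ n u)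
    (hmatch : ∀ k ≤ n, iteratedDeriv k u τ = -iteratedDeriv k u 0) :
    ContDiff ℝ n (antiperiodicExt τ u) := by
  induction n generalizing u with
  | zero =>
    rw [Nat.cast_zero, contDiff_zero] at hu ⊢
    exact continuous_antiperiodicExt hτ hu (by simpa using hmatch 0 le_rfl)
  | succ n ih =>
    rw [Nat.cast_succ, contDiff_succ_iff_deriv] at hu ⊢
    have hderiv := hasDerivAt_antiperiodicExt hτ hu.1 (by simpa using hmatch 0 (by lia))
      (by simpa using hmatch 1 (by lia))
    refine ⟨fun s => (hderiv s).differentiableAt, by simp, ?_⟩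
    rw [funext fun s => (hderiv s).deriv]
    exact ih hu.2.2 fun k hk => by simpa [iteratedDeriv_succ'] using hmatch (k + 1) (by lia)

end AntiperiodicExt

/-! ### The ratio of consecutive zeros and the basic arc -/

/-- The ratio of consecutive zeros of a self-similar solution of `F''' = -sgn F` on `(0, ∞)`; it is
the root of `θ² - 3θ + 1` in `(0, 1)`. -/
noncomputable def zeroRatio : ℝ := (3 - √5) / 2

local notation "θ" => zeroRatio

theorem zeroRatio_sq : θ ^ 2 = 3 * θ - 1 := by
  rw [zeroRatio]
  linear_combination (1 / 4 : ℝ) * Real.sq_sqrt (show (0 : ℝ) ≤ 5 by norm_num)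

theorem zeroRatio_mem_Ioo : θ ∈ Ioo (0.38 : ℝ) 0.39 := by
  have h₁ : 2.22 < √5 := Real.lt_sqrt_of_sq_lt (by norm_num)
  have h₂ : √5 < 2.24 := (Real.sqrt_lt' (by norm_num)).2 (by norm_num)
  constructor <;> rw [zeroRatio] <;> linarith

theorem zeroRatio_pos : 0 < θ := by linarith [zeroRatio_mem_Ioo.1]

theorem zeroRatio_lt_one : θ < 1 := by linarith [zeroRatio_mem_Ioo.2]

/-- The fixed point `(1 + θ) / 5`, equivalently `(5 - √5) / 10`, of the recursion relating the
shape parameters of consecutive arcs. -/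
noncomputable def fixedRatio : ℝ := (1 + θ) / 5

theorem fixedRatio_quadratic : 5 * fixedRatio ^ 2 - 5 * fixedRatio + 1 = 0 := by
  rw [fixedRatio]
  linear_combination (1 / 5 : ℝ) * zeroRatio_sq

theorem one_sub_fixedRatio_mul : (1 - fixedRatio) * θ = fixedRatio := by
  rw [fixedRatio]
  linear_combination (-1 / 5 : ℝ) * zeroRatio_sq

theorem abs_sub_fixedRatio_le {p q : ℝ} (hp : p ∈ Ioo 0 (1 / 3)) (hq : q ∈ Ioo 0 (1 / 3))
    (hpq : (2 - 3 * p) * q ^ 2 = (1 - 3 * q) * (1 - p) ^ 2) :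
    |q - fixedRatio| ≤ 1 / 2 * |p - fixedRatio| := by
  obtain ⟨hp₀, hp₁⟩ := hp
  obtain ⟨hq₀, hq₁⟩ := hq
  have hm := fixedRatio_quadratic
  have hm₁ : 0.276 < fixedRatio := by rw [fixedRatio]; linarith [zeroRatio_mem_Ioo.1]
  have hm₂ : fixedRatio < 0.278 := by rw [fixedRatio]; linarith [zeroRatio_mem_Ioo.2]
  set m := fixedRatio
  set A := 3 * m ^ 2 - (1 - 3 * m) * (2 - p - m) with hA
  set B := (2 - 3 * p) * (q + m) + 3 * (1 - p) ^ 2 with hB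
  -- Subtract from `hpq` the same relation with `p = q = m`.
  have hfactor : (q - m) * B = (p - m) * A := by
    rw [hA, hB]
    linear_combination hpq + hm
  have hB₁ : 1 ≤ B := by nlinarith
  have hA₁ : |A| ≤ 1 / 2 := by
    rw [abs_le]
    constructor <;> nlinarith
  calc |q - m| ≤ |q - m| * |B| := le_mul_of_one_le_right (abs_nonneg _) (hB₁.trans (le_abs_self B))
    _ = |p - m| * |A| := by rw [← abs_mul, hfactor, abs_mul]
    _ ≤ |p - m| * (1 / 2) := by gcongr
    _ = 1 / 2 * |p - m| := mul_comm _ _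

/-- The time `-log θ` between consecutive zeros of the periodic solution: half its period. -/
noncomputable def halfPeriod : ℝ := -Real.log θ

local notation "τ" => halfPeriod

theorem halfPeriod_pos : 0 < τ := neg_pos.2 (Real.log_neg zeroRatio_pos zeroRatio_lt_one)

theorem exp_neg_halfPeriod : Real.exp (-τ) = θ := by
  rw [halfPeriod, neg_neg, Real.exp_log zeroRatio_pos]

/-- The exponential polynomial `a + b e⁻ˢ + c e⁻²ˢ + d e⁻³ˢ`: the general solution of the linear
equation `u''' + 6u'' + 11u' + 6u = 6a`. -/
noncomputable def expPoly (a b c d s : ℝ) : ℝ :=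
  a + b * Real.exp (-s) + c * Real.exp (-s) ^ 2 + d * Real.exp (-s) ^ 3

theorem contDiff_expPoly (a b c d : ℝ) {n : WithTop ℕ∞} : ContDiff ℝ n (expPoly a b c d) := by
  unfold expPoly
  fun_prop

theorem deriv_expPoly (a b c d : ℝ) :
    deriv (expPoly a b c d) = expPoly 0 (-b) (-2 * c) (-3 * d) := by
  ext s
  have hexp : HasDerivAt (fun s => Real.exp (-s)) (-Real.exp (-s)) s :=
    (hasDerivAt_neg s).exp.congr_deriv (by ring)
  refine ((((hexp.const_mul b).const_add a).add ((hexp.pow 2).const_mul c)).add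
    ((hexp.pow 3).const_mul d)).deriv.trans ?_
  rw [expPoly]
  ring

/-- The solution on `[0, τ]` of the equation with `sgn φ` replaced by `1`, satisfying
`u⁽ᵏ⁾(τ) = -u⁽ᵏ⁾(0)` for `k = 0, 1, 2`. These conditions force the coefficients
`1 / (1 + θ)`, `-1 / (1 + θ²)`, `1 / (3 (1 + θ³))`, here reduced by `θ² = 3θ - 1`; the remaining
requirement `u(0) = 0` is then `θ³ - 2θ² - 2θ + 1 = (θ + 1)(θ² - 3θ + 1) = 0`. -/
noncomputable def oscArc : ℝ → ℝ :=
  expPoly (-1 / 6) ((4 - θ) / 5) (-(3 - θ) / 3) ((11 - 4 * θ) / 30)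

theorem contDiff_oscArc {n : WithTop ℕ∞} : ContDiff ℝ n oscArc := contDiff_expPoly ..

theorem oscArc_eq_mul (s : ℝ) :
    oscArc s = (11 - 4 * θ) / 30 *
      ((1 - Real.exp (-s)) * (Real.exp (-s) - θ) * (1 + θ - Real.exp (-s))) := by
  rw [oscArc, expPoly]
  linear_combination
    (-8 * Real.exp (-s) ^ 2 + (4 * θ + 13) * Real.exp (-s) - (4 * θ + 5)) / 30 * zeroRatio_sq

theorem oscArc_zero : oscArc 0 = 0 := by simp [oscArc_eq_mul]

theorem iteratedDeriv_oscArc_halfPeriod {k : ℕ} (hk : k ≤ 2) :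
    iteratedDeriv k oscArc τ = -iteratedDeriv k oscArc 0 := by
  have hθ := zeroRatio_sq
  interval_cases k <;>
    simp only [oscArc, iteratedDeriv_succ, iteratedDeriv_zero, deriv_expPoly, expPoly,
      exp_neg_halfPeriod, neg_zero, Real.exp_zero]
  · linear_combination (-4 * θ ^ 2 + 9 * θ - 5) / 30 * hθ
  · linear_combination (12 * θ ^ 2 - 17 * θ + 3) / 30 * hθ
  · linear_combination (-36 * θ ^ 2 + 31 * θ + 3) / 30 * hθ

theorem oscArc_pos {s : ℝ} (hs : s ∈ Ioo 0 τ) : 0 < oscArc s := by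
  have h₀ : Real.exp (-s) < 1 := Real.exp_lt_one_iff.2 (neg_neg_of_pos hs.1)
  have h₁ : θ < Real.exp (-s) := by
    rw [← exp_neg_halfPeriod]
    exact Real.exp_lt_exp.2 (neg_lt_neg hs.2)
  have hθ := zeroRatio_mem_Ioo
  rw [oscArc_eq_mul]
  refine mul_pos (by linarith [hθ.2]) (mul_pos (mul_pos ?_ ?_) ?_) <;> linarith [hθ.1]

theorem oscArc_ode (s : ℝ) :
    deriv (deriv (deriv oscArc)) s =
      -(6 * deriv (deriv oscArc) s + 11 * deriv oscArc s + 6 * oscArc s + 1) := by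
  simp only [oscArc, deriv_expPoly, expPoly]
  ring

/-! ### The relay equation -/

section Relay

variable {F F₁ F₂ : ℝ → ℝ} {L b c d x : ℝ}

/-- `F` is a solution, with derivatives `F₁` and `F₂`, of the relay equation `F''' = -sgn F` on
`(0, ∞)`: it is of class `C²`, and satisfies the equation wherever it does not vanish. -/
structure IsRelaySol (F F₁ F₂ : ℝ → ℝ) : Prop where
  hasDerivAt : ∀ x, 0 < x → HasDerivAt F (F₁ x) x
  hasDerivAt₁ : ∀ x, 0 < x → HasDerivAt F₁ (F₂ x) x
  continuousAt₂ : ∀ x, 0 < x → ContinuousAt F₂ x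
  hasDerivAt₂ : ∀ x, 0 < x → F x ≠ 0 → HasDerivAt F₂ (-Real.sign (F x)) x

/-- The quantity `F F'' - F'² / 2`, whose derivative along `F''' = -sgn F` is `-|F|`. -/
noncomputable def relayEnergy (F F₁ F₂ : ℝ → ℝ) (x : ℝ) : ℝ := F x * F₂ x - F₁ x ^ 2 / 2

/-- `F` vanishes at `c` and `d` and is positive in between: a positive arc on the half-line. -/
structure IsPosArc (F : ℝ → ℝ) (c d : ℝ) : Prop where
  left_pos : 0 < c
  lt : c < d
  left_eq_zero : F c = 0
  right_eq_zero : F d = 0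
  pos : ∀ x ∈ Ioo c d, 0 < F x

/-- The scale-invariant shape parameter `F''(c) / (d - c)` of the arc of `F` between `c` and `d`. -/
noncomputable def arcRatio (F₂ : ℝ → ℝ) (c d : ℝ) : ℝ := F₂ c / (d - c)

theorem IsPosArc.length_mul_arcRatio (harc : IsPosArc F c d) (F₂ : ℝ → ℝ) :
    (d - c) * arcRatio F₂ c d = F₂ c :=
  mul_div_cancel₀ _ (sub_pos.2 harc.lt).ne'

namespace IsRelaySol

theorem neg (h : IsRelaySol F F₁ F₂) : IsRelaySol (-F) (-F₁) (-F₂) where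
  hasDerivAt x hx := (h.hasDerivAt x hx).neg
  hasDerivAt₁ x hx := (h.hasDerivAt₁ x hx).neg
  continuousAt₂ x hx := (h.continuousAt₂ x hx).neg
  hasDerivAt₂ x hx hFx := by
    simpa only [Pi.neg_apply, Real.sign_neg] using
      (h.hasDerivAt₂ x hx (neg_ne_zero.1 hFx)).neg

theorem continuousOn (h : IsRelaySol F F₁ F₂) : ContinuousOn F (Ioi 0) :=
  fun x hx => (h.hasDerivAt x hx).continuousAt.continuousWithinAt

theorem hasDerivAt_relayEnergy (h : IsRelaySol F F₁ F₂) (hx : 0 < x) :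
    HasDerivAt (relayEnergy F F₁ F₂) (-|F x|) x := by
  suffices hmul : HasDerivAt (F * F₂) (F₁ x * F₂ x - |F x|) x from
    (hmul.sub (((h.hasDerivAt₁ x hx).pow 2).div_const 2)).congr_deriv (by ring)
  by_cases hFx : F x = 0
  · exact (hasDerivAt_mul_of_eq_zero (h.hasDerivAt x hx) hFx (h.continuousAt₂ x hx)).congr_deriv
      (by simp [hFx])
  · refine ((h.hasDerivAt x hx).mul (h.hasDerivAt₂ x hx hFx)).congr_deriv ?_
    rcases lt_or_gt_of_ne hFx with hneg | hpos
    · rw [Real.sign_of_neg hneg, abs_of_neg hneg]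
      ring
    · rw [Real.sign_of_pos hpos, abs_of_pos hpos]
      ring

theorem antitoneOn_relayEnergy (h : IsRelaySol F F₁ F₂) :
    AntitoneOn (relayEnergy F F₁ F₂) (Ioi 0) :=
  antitoneOn_of_hasDerivWithinAt_nonpos (convex_Ioi 0)
    (fun _ hx => (h.hasDerivAt_relayEnergy hx).continuousAt.continuousWithinAt)
    (fun _ hx => (h.hasDerivAt_relayEnergy (interior_subset hx)).hasDerivWithinAt)
    fun _ _ => neg_nonpos.2 (abs_nonneg _)

section Taylor

variable (h : IsRelaySol F F₁ F₂) (hc : 0 < c) (hpos : ∀ y ∈ Ioo c d, 0 < F y) (hx : x ∈ Icc c d)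
include h hc hpos hx

theorem taylor₂ : F₂ x = F₂ c - (x - c) := by
  refine eqOn_Icc_of_hasDerivAt_eq (f' := fun _ => -1) (g := fun x => F₂ c - (x - c))
    (fun y hy => (h.continuousAt₂ y (hc.trans_le hy.1)).continuousWithinAt) (by fun_prop)
    (fun y hy => ?_) (fun y _ => ?_) (by simp) hx
  · simpa only [Real.sign_of_pos (hpos y hy)] using
      h.hasDerivAt₂ y (hc.trans hy.1) (hpos y hy).ne'
  · exact ((hasDerivAt_id y).sub_const c).const_sub (F₂ c)

theorem taylor₁ : F₁ x = F₁ c + F₂ c * (x - c) - (x - c) ^ 2 / 2 := by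
  refine eqOn_Icc_of_hasDerivAt_eq (f' := F₂)
    (g := fun x => F₁ c + F₂ c * (x - c) - (x - c) ^ 2 / 2)
    (fun y hy => (h.hasDerivAt₁ y (hc.trans_le hy.1)).continuousAt.continuousWithinAt)
    (by fun_prop) (fun y hy => h.hasDerivAt₁ y (hc.trans hy.1)) (fun y hy => ?_) (by simp) hx
  have hid := (hasDerivAt_id' y).sub_const c
  refine (((hid.const_mul (F₂ c)).const_add (F₁ c)).sub ((hid.pow 2).div_const 2)).congr_deriv ?_
  rw [h.taylor₂ hc hpos (Ioo_subset_Icc_self hy)]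
  ring

theorem taylor :
    F x = F c + F₁ c * (x - c) + F₂ c * (x - c) ^ 2 / 2 - (x - c) ^ 3 / 6 := by
  refine eqOn_Icc_of_hasDerivAt_eq (f' := F₁)
    (g := fun x => F c + F₁ c * (x - c) + F₂ c * (x - c) ^ 2 / 2 - (x - c) ^ 3 / 6)
    (fun y hy => (h.hasDerivAt y (hc.trans_le hy.1)).continuousAt.continuousWithinAt)
    (by fun_prop) (fun y hy => h.hasDerivAt y (hc.trans hy.1)) (fun y hy => ?_) (by simp) hx
  have hid := (hasDerivAt_id' y).sub_const c
  refine ((((hid.const_mul (F₁ c)).const_add (F c)).add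
    (((hid.pow 2).const_mul (F₂ c)).div_const 2)).sub ((hid.pow 3).div_const 6)).congr_deriv ?_
  rw [h.taylor₁ hc hpos (Ioo_subset_Icc_self hy)]
  ring

end Taylor

section Arc

variable (h : IsRelaySol F F₁ F₂) (harc : IsPosArc F c d)
include h harc

theorem deriv_left : F₁ c = (d - c) ^ 2 * (1 - 3 * arcRatio F₂ c d) / 6 := by
  have htaylor := h.taylor harc.left_pos harc.pos (right_mem_Icc.2 harc.lt.le)
  rw [harc.left_eq_zero, harc.right_eq_zero] at htaylor
  refine mul_right_cancel₀ (sub_pos.2 harc.lt).ne' ?_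
  linear_combination -htaylor + (d - c) ^ 2 / 2 * harc.length_mul_arcRatio F₂

theorem deriv_right : F₁ d = -((d - c) ^ 2 * (2 - 3 * arcRatio F₂ c d)) / 6 := by
  rw [h.taylor₁ harc.left_pos harc.pos (right_mem_Icc.2 harc.lt.le), h.deriv_left harc]
  linear_combination -(d - c) * harc.length_mul_arcRatio F₂

theorem deriv₂_right : F₂ d = -((d - c) * (1 - arcRatio F₂ c d)) := by
  rw [h.taylor₂ harc.left_pos harc.pos (right_mem_Icc.2 harc.lt.le), ← harc.length_mul_arcRatio F₂]
  ring

theorem eq_cubic (hx : x ∈ Icc c d) :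
    F x = (x - c) * (d - x) * (x - c + (1 - 3 * arcRatio F₂ c d) * (d - c)) / 6 := by
  rw [h.taylor harc.left_pos harc.pos hx, harc.left_eq_zero, h.deriv_left harc,
    ← harc.length_mul_arcRatio F₂]
  ring

end Arc

theorem arcRatio_recursion (h : IsRelaySol F F₁ F₂) (hprev : IsPosArc (-F) b c)
    (harc : IsPosArc F c d) :
    (2 - 3 * arcRatio (-F₂) b c) * arcRatio F₂ c d ^ 2 =
      (1 - 3 * arcRatio F₂ c d) * (1 - arcRatio (-F₂) b c) ^ 2 := by
  have h₁ := h.neg.deriv_right hprev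
  have h₂ := h.neg.deriv₂_right hprev
  rw [Pi.neg_apply, neg_div, neg_inj, h.deriv_left harc] at h₁
  rw [Pi.neg_apply, neg_inj, ← harc.length_mul_arcRatio F₂] at h₂
  set p := arcRatio (-F₂) b c
  set q := arcRatio F₂ c d
  have hlen : (c - b) ^ 2 * (d - c) ^ 2 ≠ 0 :=
    mul_ne_zero (pow_ne_zero 2 (sub_pos.2 hprev.lt).ne') (pow_ne_zero 2 (sub_pos.2 harc.lt).ne')
  refine mul_left_cancel₀ hlen ?_
  linear_combination (2 - 3 * p) * (c - b) ^ 2 * ((d - c) * q + (c - b) * (1 - p)) * h₂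
    - 6 * (c - b) ^ 2 * (1 - p) ^ 2 * h₁

end IsRelaySol

/-- A nonzero solution of the relay equation which is homogeneous of degree three with respect to
the discrete dilation group generated by `L`. -/
structure IsSelfSimilarRelaySol (F F₁ F₂ : ℝ → ℝ) (L : ℝ) : Prop extends IsRelaySol F F₁ F₂ where
  one_lt : 1 < L
  apply_mul : ∀ x, 0 < x → F (L * x) = L ^ 3 * F x
  exists_ne_zero : ∃ x, 0 < x ∧ F x ≠ 0

namespace IsSelfSimilarRelaySol

variable (h : IsSelfSimilarRelaySol F F₁ F₂ L)
include h

theorem neg : IsSelfSimilarRelaySol (-F) (-F₁) (-F₂) L where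
  toIsRelaySol := h.toIsRelaySol.neg
  one_lt := h.one_lt
  apply_mul x hx := by simp only [Pi.neg_apply, h.apply_mul x hx, mul_neg]
  exists_ne_zero := h.exists_ne_zero.imp fun _ => And.imp_right neg_ne_zero.2

theorem scale_pos : 0 < L := one_pos.trans h.one_lt

theorem apply_mul₁ (hx : 0 < x) : F₁ (L * x) = L ^ 2 * F₁ x :=
  homogeneous_of_hasDerivAt h.scale_pos h.hasDerivAt h.apply_mul hx

theorem apply_mul₂ (hx : 0 < x) : F₂ (L * x) = L * F₂ x :=
  (homogeneous_of_hasDerivAt h.scale_pos h.hasDerivAt₁ (fun _ => h.apply_mul₁) hx).trans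
    (by rw [pow_one])

theorem relayEnergy_mul (hx : 0 < x) :
    relayEnergy F F₁ F₂ (L * x) = L ^ 4 * relayEnergy F F₁ F₂ x := by
  rw [relayEnergy, relayEnergy, h.apply_mul x hx, h.apply_mul₁ hx, h.apply_mul₂ hx]
  ring

theorem relayEnergy_nonpos (hx : 0 < x) : relayEnergy F F₁ F₂ x ≤ 0 := by
  have hle : relayEnergy F F₁ F₂ (L * x) ≤ relayEnergy F F₁ F₂ x :=
    h.antitoneOn_relayEnergy hx (mul_pos h.scale_pos hx)
      (le_mul_of_one_le_left hx.le h.one_lt.le)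
  rw [h.relayEnergy_mul hx] at hle
  nlinarith [one_lt_pow₀ h.one_lt four_ne_zero]

-- A zero of the energy would propagate to arbitrarily large dilates, hence to all of `(0, ∞)`.
theorem relayEnergy_neg (hx : 0 < x) : relayEnergy F F₁ F₂ x < 0 := by
  refine (h.relayEnergy_nonpos hx).lt_of_ne fun hx₀ => ?_
  have hzero (n : ℕ) : relayEnergy F F₁ F₂ (L ^ n * x) = 0 := by
    induction n with
    | zero => simpa using hx₀
    | succ n ih =>
      rw [pow_succ', mul_assoc, h.relayEnergy_mul (mul_pos (pow_pos h.scale_pos n) hx), ih,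
        mul_zero]
  obtain ⟨y, hy, hFy⟩ := h.exists_ne_zero
  obtain ⟨n, hn⟩ := pow_unbounded_of_one_lt (y / x) h.one_lt
  rw [div_lt_iff₀ hx] at hn
  have hconst : relayEnergy F F₁ F₂ =ᶠ[𝓝 y] fun _ => 0 := by
    filter_upwards [Ioo_mem_nhds hy hn] with z hz
    refine (h.relayEnergy_nonpos hz.1).antisymm ?_
    rw [← hzero n]
    exact h.antitoneOn_relayEnergy hz.1 (hy.trans hn) hz.2.le
  have hderiv := (h.hasDerivAt_relayEnergy hy).unique
    ((hasDerivAt_const y 0).congr_of_eventuallyEq hconst)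
  exact hFy (abs_eq_zero.1 (neg_eq_zero.1 hderiv))

theorem deriv_ne_zero (hx : 0 < x) (hFx : F x = 0) : F₁ x ≠ 0 := by
  intro hF₁x
  simpa [relayEnergy, hFx, hF₁x] using h.relayEnergy_neg hx

theorem deriv_left_pos (harc : IsPosArc F c d) : 0 < F₁ c := by
  refine (h.deriv_ne_zero harc.left_pos harc.left_eq_zero).lt_or_gt.resolve_left fun hneg => ?_
  have hev := eventually_nhdsGT_pos_of_hasDerivAt (h.neg.hasDerivAt c harc.left_pos)
    (by simp [harc.left_eq_zero]) (neg_pos.2 hneg)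
  obtain ⟨x, hx, hxarc⟩ := (hev.and (Ioo_mem_nhdsGT harc.lt)).exists
  exact (neg_pos.1 hx).not_gt (harc.pos x hxarc)

theorem exists_isPosArc_right (hc : 0 < c) (hFc : F c = 0) (hF₁c : 0 < F₁ c) :
    ∃ d, IsPosArc F c d := by
  have hLc : c < L * c := lt_mul_of_one_lt_left hc h.one_lt
  obtain ⟨d, hd, hFd, hpos⟩ := exists_first_zero
    (h.continuousOn.mono fun _ hx => hc.trans_le hx.1) hLc
    (eventually_nhdsGT_pos_of_hasDerivAt (h.hasDerivAt c hc) hFc hF₁c)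
    (by rw [h.apply_mul c hc, hFc, mul_zero])
  exact ⟨d, hc, hd.1, hFc, hFd, hpos⟩

theorem exists_isPosArc_left (harc : IsPosArc F c d) : ∃ b, IsPosArc (-F) b c := by
  have hc := harc.left_pos
  have hcL : 0 < c / L := div_pos hc h.scale_pos
  have hFc : (-F) c = 0 := by simp [harc.left_eq_zero]
  have hscale := h.neg.apply_mul _ hcL
  rw [mul_div_cancel₀ _ h.scale_pos.ne', hFc, eq_comm,
    mul_eq_zero_iff_left (pow_pos h.scale_pos 3).ne'] at hscale
  obtain ⟨b, hb, hFb, hpos⟩ := exists_last_zero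
    (h.neg.continuousOn.mono fun _ hx => hcL.trans_le hx.1) (div_lt_self hc h.one_lt)
    (eventually_nhdsLT_pos_of_hasDerivAt (h.neg.hasDerivAt c hc) hFc
      (neg_neg_of_pos (h.deriv_left_pos harc))) hscale.le
  exact ⟨b, hcL.trans_le hb.1, hb.2, hFb, hFc, hpos⟩

theorem arcRatio_mem_Ioo (harc : IsPosArc F c d) : arcRatio F₂ c d ∈ Ioo 0 (1 / 3) := by
  have hlt {F F₁ F₂ : ℝ → ℝ} {c d : ℝ} (h : IsSelfSimilarRelaySol F F₁ F₂ L)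
      (harc : IsPosArc F c d) : arcRatio F₂ c d < 1 / 3 := by
    have hpos := h.deriv_left_pos harc
    rw [h.deriv_left harc] at hpos
    nlinarith [sq_nonneg (d - c)]
  refine ⟨?_, hlt h harc⟩
  obtain ⟨b, hprev⟩ := h.exists_isPosArc_left harc
  have hF₂c := h.neg.deriv₂_right hprev
  rw [Pi.neg_apply, neg_inj] at hF₂c
  rw [arcRatio, hF₂c]
  have hp := hlt h.neg hprev
  exact div_pos (mul_pos (sub_pos.2 hprev.lt) (by linarith)) (sub_pos.2 harc.lt)

theorem deriv_right_neg (harc : IsPosArc F c d) : F₁ d < 0 := by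
  have ha := (h.arcRatio_mem_Ioo harc).2
  rw [h.deriv_right harc]
  nlinarith [sq_pos_of_pos (sub_pos.2 harc.lt)]

-- The recursion for the shape parameters is contracting, and an arc has arbitrarily many
-- predecessors.
theorem arcRatio_eq (harc : IsPosArc F c d) : arcRatio F₂ c d = fixedRatio := by
  suffices hbound : ∀ n : ℕ, ∀ {F F₁ F₂ : ℝ → ℝ} {c d : ℝ}, IsSelfSimilarRelaySol F F₁ F₂ L →
      IsPosArc F c d → |arcRatio F₂ c d - fixedRatio| ≤ (1 / 2) ^ n by
    have hlim : Tendsto (fun n : ℕ => (1 / 2 : ℝ) ^ n) atTop (𝓝 0) :=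
      tendsto_pow_atTop_nhds_zero_of_lt_one (by norm_num) (by norm_num)
    exact sub_eq_zero.1 (abs_nonpos_iff.1 (ge_of_tendsto' hlim fun n => hbound n h harc))
  intro n
  induction n with
  | zero =>
    intro F F₁ F₂ c d h harc
    obtain ⟨h₀, h₁⟩ := h.arcRatio_mem_Ioo harc
    have hm := zeroRatio_mem_Ioo
    rw [abs_le, fixedRatio]
    constructor <;> linarith [hm.1, hm.2]
  | succ n ih =>
    intro F F₁ F₂ c d h harc
    obtain ⟨b, hprev⟩ := h.exists_isPosArc_left harc
    calc |arcRatio F₂ c d - fixedRatio|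
        ≤ 1 / 2 * |arcRatio (-F₂) b c - fixedRatio| :=
          abs_sub_fixedRatio_le (h.neg.arcRatio_mem_Ioo hprev) (h.arcRatio_mem_Ioo harc)
            (h.arcRatio_recursion hprev harc)
      _ ≤ 1 / 2 * (1 / 2) ^ n := by gcongr; exact ih h.neg hprev
      _ = (1 / 2) ^ (n + 1) := (pow_succ' _ _).symm

theorem length_left (hprev : IsPosArc (-F) b c) (harc : IsPosArc F c d) :
    c - b = θ * (d - c) := by
  have hF₂c := h.neg.deriv₂_right hprev
  rw [Pi.neg_apply, neg_inj, ← harc.length_mul_arcRatio F₂, h.arcRatio_eq harc,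
    h.neg.arcRatio_eq hprev] at hF₂c
  have hm : 1 - fixedRatio ≠ 0 := by
    rw [fixedRatio]
    linarith [zeroRatio_lt_one]
  refine mul_right_cancel₀ hm ?_
  linear_combination -hF₂c - (d - c) * one_sub_fixedRatio_mul

-- `w` is the point at which the zeros preceding `c` accumulate.
theorem exists_zero_of_isPosArc {w : ℝ} (harc : IsPosArc F c d)
    (hw : (1 - θ) * w = c - θ * d) (n : ℕ) :
    ∃ z, 0 < z ∧ F z = 0 ∧ z = w + θ ^ n * (c - w) := by
  induction n generalizing F F₁ F₂ c d with
  | zero => exact ⟨c, harc.left_pos, harc.left_eq_zero, by ring⟩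
  | succ n ih =>
    obtain ⟨b, hprev⟩ := h.exists_isPosArc_left harc
    have hlen := h.length_left hprev harc
    obtain ⟨z, hz, hFz, hzw⟩ := ih h.neg hprev (by linear_combination hw + hlen)
    exact ⟨z, hz, neg_eq_zero.1 hFz, by linear_combination hzw - θ ^ n * (hlen + hw)⟩

theorem left_eq (harc : IsPosArc F c d) : c = θ * d := by
  obtain ⟨hθ₀, hθ₁⟩ : 0 < θ ∧ θ < 1 := ⟨zeroRatio_pos, zeroRatio_lt_one⟩
  set w := (c - θ * d) / (1 - θ)
  have hw : (1 - θ) * w = c - θ * d := mul_div_cancel₀ _ (sub_pos.2 hθ₁).ne'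
  have hwc : w < c := by nlinarith [harc.lt]
  choose z hz hFz hzw using h.exists_zero_of_isPosArc harc hw
  have hlim : Tendsto z atTop (𝓝 w) := by
    have hpow := tendsto_pow_atTop_nhds_zero_of_lt_one hθ₀.le hθ₁
    simpa [← hzw] using (hpow.mul_const (c - w)).const_add w
  have hw₀ : w = 0 := by
    refine (ge_of_tendsto' hlim fun n => (hz n).le).antisymm' (not_lt.1 fun hw_pos => ?_)
    have hFw : F w = 0 := tendsto_nhds_unique
      ((h.hasDerivAt w hw_pos).continuousAt.tendsto.comp hlim) (by simp [Function.comp_def, hFz])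
    have hne : ∀ n, z n ≠ w := fun n => by
      rw [hzw n]
      simp [hθ₀.ne', (sub_pos.2 hwc).ne']
    have hiso := (h.hasDerivAt w hw_pos).eventually_ne (c := 0) (h.deriv_ne_zero hw_pos hFw)
    obtain ⟨n, hn⟩ := ((tendsto_nhdsWithin_iff.2
      ⟨hlim, Eventually.of_forall hne⟩).eventually hiso).exists
    exact hn (hFz n)
  rw [hw₀, mul_zero] at hw
  linarith

-- A positive solution would be the cubic `-x³ / 6`, by Taylor's formula between `1` and `L`.
theorem not_forall_pos : ¬ ∀ x, 0 < x → 0 < F x := by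
  intro hpos
  have hL := h.one_lt
  have hpos' : ∀ y ∈ Ioo 1 L, 0 < F y := fun y hy => hpos y (one_pos.trans hy.1)
  have hmem : L ∈ Icc 1 L := right_mem_Icc.2 hL.le
  have hF := h.taylor one_pos hpos' hmem
  have hF₁ := h.taylor₁ one_pos hpos' hmem
  have hF₂ := h.taylor₂ one_pos hpos' hmem
  have e := h.apply_mul 1 one_pos
  have e₁ := h.apply_mul₁ one_pos
  have e₂ := h.apply_mul₂ one_pos
  rw [mul_one] at e e₁ e₂
  have hv₂ : F₂ 1 = -1 :=
    mul_left_cancel₀ (sub_pos.2 hL).ne' (by linear_combination hF₂ - e₂)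
  have hv₁ : F₁ 1 = -1 / 2 :=
    mul_left_cancel₀ (mul_pos (sub_pos.2 hL) (by linarith : 0 < L + 1)).ne'
      (by linear_combination hF₁ - e₁ + (L - 1) * hv₂)
  have hv : F 1 = -1 / 6 :=
    mul_left_cancel₀ (mul_pos (sub_pos.2 hL) (by positivity : 0 < L ^ 2 + L + 1)).ne'
      (by linear_combination hF - e + (L - 1) * hv₁ + (L - 1) ^ 2 / 2 * hv₂)
  linarith [hpos 1 one_pos]

theorem exists_eq_zero : ∃ c, 0 < c ∧ F c = 0 := by
  obtain ⟨a, ha, hFa⟩ : ∃ x, 0 < x ∧ F x ≤ 0 := by simpa using h.not_forall_pos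
  obtain ⟨b, hb, hFb⟩ : ∃ x, 0 < x ∧ 0 ≤ F x := by simpa using h.neg.not_forall_pos
  exact isPreconnected_Ioi.intermediate_value ha hb h.continuousOn ⟨hFa, hFb⟩

theorem exists_eq_zero_deriv_pos : ∃ c, 0 < c ∧ F c = 0 ∧ 0 < F₁ c := by
  obtain ⟨c, hc, hFc⟩ := h.exists_eq_zero
  rcases (h.deriv_ne_zero hc hFc).lt_or_gt with hneg | hpos
  · obtain ⟨d, harc⟩ := h.neg.exists_isPosArc_right hc (by simp [hFc]) (neg_pos.2 hneg)
    exact ⟨d, hc.trans harc.lt, neg_eq_zero.1 harc.right_eq_zero,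
      neg_neg_iff_pos.1 (h.neg.deriv_right_neg harc)⟩
  · exact ⟨c, hc, hFc, hpos⟩

theorem apply_mul_exp_of_isPosArc (harc : IsPosArc F c d) {t : ℝ} (ht : t ∈ Icc 0 τ) :
    F (c * Real.exp t) = (c * Real.exp t) ^ 3 * oscArc t := by
  have hc := h.left_eq harc
  have hd : 0 < d := harc.left_pos.trans harc.lt
  set E := Real.exp t with hE
  have hE₀ : 0 < E := Real.exp_pos t
  have hE₁ : 1 ≤ E := Real.one_le_exp ht.1
  have hE₂ : θ * E ≤ 1 := by
    rw [← exp_neg_halfPeriod, hE, ← Real.exp_add, Real.exp_le_one_iff]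
    linarith [ht.2]
  rw [h.eq_cubic harc ⟨le_mul_of_one_le_right harc.left_pos.le hE₁, by rw [hc]; nlinarith⟩,
    h.arcRatio_eq harc, oscArc_eq_mul, Real.exp_neg, ← hE, hc, fixedRatio]
  have hcubic : E ^ 3 * ((1 - E⁻¹) * (E⁻¹ - θ) * (1 + θ - E⁻¹)) =
      (E - 1) * (1 - θ * E) * ((1 + θ) * E - 1) := by
    field_simp
  linear_combination d ^ 3 * θ * (E - 1) * (1 - θ * E) / 30 *
    (E * (4 * θ ^ 2 + 5 * θ) + 2 - 4 * θ) * zeroRatio_sq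
    - (θ * d) ^ 3 * (11 - 4 * θ) / 30 * hcubic

theorem apply_mul_exp (hc : 0 < c) (hFc : F c = 0) (hF₁c : 0 < F₁ c) {t : ℝ} (ht : 0 ≤ t) :
    F (c * Real.exp t) = (c * Real.exp t) ^ 3 * antiperiodicExt τ oscArc t := by
  obtain ⟨n, hn⟩ := exists_nat_ge (t / τ)
  rw [div_le_iff₀ halfPeriod_pos] at hn
  induction n generalizing F F₁ F₂ c t with
  | zero =>
    obtain rfl : t = 0 := ht.antisymm' (by simpa using hn)
    simp [antiperiodicExt, hFc, oscArc_zero]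
  | succ n ih =>
    obtain ⟨d, harc⟩ := h.exists_isPosArc_right hc hFc hF₁c
    rcases lt_or_ge t τ with htτ | hτt
    · rw [antiperiodicExt_eq_of_mem_Ico halfPeriod_pos (n := 0) (by simpa using ⟨ht, htτ⟩),
        h.apply_mul_exp_of_isPosArc harc ⟨ht, htτ.le⟩]
      simp
    · have hstep : d * Real.exp (t - τ) = c * Real.exp t := by
        rw [sub_eq_add_neg, Real.exp_add, exp_neg_halfPeriod, h.left_eq harc]
        ring
      have hnext := ih h.neg (hc.trans harc.lt) (by simp [harc.right_eq_zero])
        (neg_pos.2 (h.deriv_right_neg harc)) (sub_nonneg.2 hτt)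
        (by push_cast at hn; linarith)
      rw [hstep, (antiperiodic_antiperiodicExt halfPeriod_pos.ne').sub_eq, Pi.neg_apply] at hnext
      linear_combination -hnext

end IsSelfSimilarRelaySol

end Relay

/-! ### Logarithmic change of variable -/

/-- The function `x ↦ xᵏ g(log x)` on the half-line. For `k = 3` it is the similarity profile of the
thin film equation with `n = 1` whose oscillatory component is `g`, as a function of the distance
`x = 1 - y` to the interface. -/
noncomputable def logProfile (k : ℕ) (g : ℝ → ℝ) (x : ℝ) : ℝ := x ^ k * g (Real.log x)

theorem hasDerivAt_logProfile (k : ℕ) {g : ℝ → ℝ} {g' x : ℝ} (hx : x ≠ 0)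
    (hg : HasDerivAt g g' (Real.log x)) :
    HasDerivAt (logProfile (k + 1) g) (x ^ k * ((k + 1) * g (Real.log x) + g')) x := by
  refine ((hasDerivAt_pow (k + 1) x).mul (hg.comp x (Real.hasDerivAt_log hx))).congr_deriv ?_
  simp only [Nat.add_sub_cancel, Nat.cast_succ, Function.comp_apply]
  field_simp
  ring

theorem continuousAt_logProfile (k : ℕ) {g : ℝ → ℝ} {x : ℝ} (hx : x ≠ 0) (hg : Continuous g) :
    ContinuousAt (logProfile k g) x :=
  (continuousAt_id.pow k).mul (hg.continuousAt.comp (Real.continuousAt_log hx))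

theorem isOscSolOne_of_hasDerivAt {φ : ℝ → ℝ} (hφ : ContDiff ℝ 2 φ)
    (hzero : {s | φ s = 0}.Countable)
    (hode : ∀ s, φ s ≠ 0 → HasDerivAt (deriv (deriv φ))
      (-(6 * deriv (deriv φ) s + 11 * deriv φ s + 6 * φ s + Real.sign (φ s))) s) :
    IsOscSolOne φ := by
  have hφ₁ : Continuous (deriv φ) := hφ.continuous_deriv (by norm_num)
  have hφ₂ : Continuous (deriv (deriv φ)) := hφ.deriv'.continuous_deriv le_rfl
  refine ⟨hφ, fun a b => ?_, fun s hs => by rw [(hode s hs).deriv]; ring⟩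
  have hbound : Continuous fun s => |6 * deriv (deriv φ) s + 11 * deriv φ s + 6 * φ s| + 1 := by
    have := hφ.continuous
    fun_prop
  refine (integral_eq_of_hasDerivAt_off_countable _ _ hzero hφ₂.continuousOn
    (fun s hs => (hode s hs.2).differentiableAt.hasDerivAt) ?_).symm
  refine (hbound.intervalIntegrable a b).mono_fun (measurable_deriv _).aestronglyMeasurable ?_
  filter_upwards [ae_restrict_of_ae (hzero.ae_notMem volume)] with s hs
  rw [(hode s hs).deriv, norm_neg, Real.norm_eq_abs, Real.norm_eq_abs]
  refine ((abs_add_le _ _).trans ?_).trans (le_abs_self _)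
  gcongr
  rcases Real.sign_apply_eq (φ s) with h | h | h <;> simp [h]

namespace IsOscSolOne

variable {ψ : ℝ → ℝ} (h : IsOscSolOne ψ)
include h

theorem differentiable : Differentiable ℝ ψ := h.1.differentiable two_ne_zero

theorem differentiable_deriv : Differentiable ℝ (deriv ψ) := h.1.differentiable_deriv_two

theorem continuous_deriv₂ : Continuous (deriv (deriv ψ)) := h.1.deriv'.continuous_deriv le_rfl

-- Near a point where `ψ ≠ 0` the equation shows that `ψ'''` is continuous, and `ψ''` is its
-- primitive.
theorem hasDerivAt_deriv₂ {s : ℝ} (hs : ψ s ≠ 0) : HasDerivAt (deriv (deriv ψ))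
    (-(6 * deriv (deriv ψ) s + 11 * deriv ψ s + 6 * ψ s + Real.sign (ψ s))) s := by
  have hsign : ∀ᶠ y in 𝓝 s, ψ y ≠ 0 ∧ Real.sign (ψ y) = Real.sign (ψ s) := by
    have hψ := h.differentiable.continuous.continuousAt (x := s)
    rcases lt_or_gt_of_ne hs with hneg | hpos
    · filter_upwards [hψ.eventually_lt_const hneg] with y hy
      exact ⟨hy.ne, by rw [Real.sign_of_neg hy, Real.sign_of_neg hneg]⟩
    · filter_upwards [hψ.eventually_const_lt hpos] with y hy
      exact ⟨hy.ne', by rw [Real.sign_of_pos hy, Real.sign_of_pos hpos]⟩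
  have hcont : ContinuousAt (deriv (deriv (deriv ψ))) s := by
    have hrhs : Continuous fun y =>
        -(6 * deriv (deriv ψ) y + 11 * deriv ψ y + 6 * ψ y + Real.sign (ψ s)) := by
      have h₀ := h.differentiable.continuous
      have h₁ := h.differentiable_deriv.continuous
      have h₂ := h.continuous_deriv₂
      fun_prop
    refine hrhs.continuousAt.congr ?_
    filter_upwards [hsign] with y ⟨hy, hsgn⟩
    linarith [h.2.2 y hy]
  have hint := integral_hasDerivAt_right (IntervalIntegrable.refl (a := s))
    (measurable_deriv _).stronglyMeasurable.stronglyMeasurableAtFilter hcont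
  refine ((hint.const_add (deriv (deriv ψ) s)).congr_deriv ?_).congr_of_eventuallyEq
    (Eventually.of_forall fun y => ?_)
  · linarith [h.2.2 s hs]
  · linarith [h.2.1 s y]

theorem isRelaySol : IsRelaySol (logProfile 3 ψ) (logProfile 2 fun s => 3 * ψ s + deriv ψ s)
    (logProfile 1 fun s => 6 * ψ s + 5 * deriv ψ s + deriv (deriv ψ) s) where
  hasDerivAt x hx :=
    (hasDerivAt_logProfile 2 hx.ne' (h.differentiable _).hasDerivAt).congr_deriv
      (by norm_num [logProfile])
  hasDerivAt₁ x hx := by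
    refine (hasDerivAt_logProfile 1 hx.ne'
      (((h.differentiable _).hasDerivAt.const_mul 3).add
        (h.differentiable_deriv _).hasDerivAt)).congr_deriv ?_
    simp only [logProfile, Pi.add_apply]
    push_cast
    ring
  continuousAt₂ x hx := by
    have h₀ := h.differentiable.continuous
    have h₁ := h.differentiable_deriv.continuous
    have h₂ := h.continuous_deriv₂
    exact continuousAt_logProfile 1 hx.ne' (by fun_prop)
  hasDerivAt₂ x hx hFx := by
    rw [logProfile] at hFx
    have hψ : ψ (Real.log x) ≠ 0 := right_ne_zero_of_mul hFx
    have hsign : Real.sign (logProfile 3 ψ x) = Real.sign (ψ (Real.log x)) := by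
      rw [logProfile]
      rcases lt_or_gt_of_ne hψ with hneg | hpos
      · rw [Real.sign_of_neg hneg, Real.sign_of_neg (mul_neg_of_pos_of_neg (pow_pos hx 3) hneg)]
      · rw [Real.sign_of_pos hpos, Real.sign_of_pos (mul_pos (pow_pos hx 3) hpos)]
    refine (hasDerivAt_logProfile 0 hx.ne'
      ((((h.differentiable _).hasDerivAt.const_mul 6).add
        ((h.differentiable_deriv _).hasDerivAt.const_mul 5)).add
        (h.hasDerivAt_deriv₂ hψ))).congr_deriv ?_
    rw [hsign]
    simp only [Pi.add_apply]
    push_cast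
    ring

theorem isSelfSimilarRelaySol {P : ℝ} (hP : 0 < P) (hper : Function.Periodic ψ P)
    (hne : ∃ s, ψ s ≠ 0) :
    IsSelfSimilarRelaySol (logProfile 3 ψ) (logProfile 2 fun s => 3 * ψ s + deriv ψ s)
      (logProfile 1 fun s => 6 * ψ s + 5 * deriv ψ s + deriv (deriv ψ) s) (Real.exp P) where
  toIsRelaySol := h.isRelaySol
  one_lt := Real.one_lt_exp_iff.2 hP
  apply_mul x hx := by
    rw [logProfile, logProfile, Real.log_mul (Real.exp_ne_zero P) hx.ne', Real.log_exp, add_comm,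
      hper, mul_pow, mul_assoc]
  exists_ne_zero := by
    obtain ⟨s, hs⟩ := hne
    exact ⟨Real.exp s, Real.exp_pos s, by simp [logProfile, hs]⟩

end IsOscSolOne

/-! ### The periodic solution -/

section PeriodicSolution

/-- The periodic solution: consecutive half-periods carry the arc `oscArc` with alternating sign. -/
noncomputable def oscSol : ℝ → ℝ := antiperiodicExt τ oscArc

theorem oscSol_eq_zero_iff {s : ℝ} : oscSol s = 0 ↔ s ∈ range fun n : ℤ => n * τ :=
  antiperiodicExt_eq_zero_iff halfPeriod_pos oscArc_zero fun _ ht => (oscArc_pos ht).ne'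

theorem antiperiodic_oscSol : Function.Antiperiodic oscSol τ :=
  antiperiodic_antiperiodicExt halfPeriod_pos.ne'

theorem periodic_oscSol : Function.Periodic oscSol (2 * τ) := antiperiodic_oscSol.periodic_two_mul

theorem exists_oscSol_pos : ∃ s, 0 < oscSol s := by
  have hτ := halfPeriod_pos
  refine ⟨τ / 2, ?_⟩
  rw [oscSol, antiperiodicExt_eq_of_mem_Ico hτ (n := 0) ⟨by simpa using (half_pos hτ).le,
    by simpa using half_lt_self hτ⟩]
  simpa using oscArc_pos ⟨half_pos hτ, half_lt_self hτ⟩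

theorem exists_oscSol_neg : ∃ s, oscSol s < 0 := by
  obtain ⟨s, hs⟩ := exists_oscSol_pos
  exact ⟨s + τ, by rwa [antiperiodic_oscSol, neg_lt_zero]⟩

theorem deriv_oscSol : deriv oscSol = antiperiodicExt τ (deriv oscArc) :=
  funext fun s => (hasDerivAt_antiperiodicExt halfPeriod_pos
    ((contDiff_oscArc (n := 1)).differentiable one_ne_zero)
    (by simpa using iteratedDeriv_oscArc_halfPeriod zero_le_two)
    (by simpa using iteratedDeriv_oscArc_halfPeriod one_le_two) s).deriv

theorem deriv_deriv_oscSol :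
    deriv (deriv oscSol) = antiperiodicExt τ (deriv (deriv oscArc)) := by
  rw [deriv_oscSol]
  exact funext fun s => (hasDerivAt_antiperiodicExt halfPeriod_pos
    (contDiff_oscArc (n := 2)).differentiable_deriv_two
    (by simpa using iteratedDeriv_oscArc_halfPeriod one_le_two)
    (by simpa [iteratedDeriv_succ] using iteratedDeriv_oscArc_halfPeriod le_rfl) s).deriv

theorem hasDerivAt_deriv₂_oscSol {s : ℝ} (hs : oscSol s ≠ 0) :
    HasDerivAt (deriv (deriv oscSol)) (-(6 * deriv (deriv oscSol) s + 11 * deriv oscSol s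
      + 6 * oscSol s + Real.sign (oscSol s))) s := by
  have hdiff : Differentiable ℝ (deriv (deriv oscArc)) :=
    (contDiff_oscArc (n := 3)).deriv'.differentiable_deriv_two
  rw [Ne, oscSol_eq_zero_iff] at hs
  rw [deriv_deriv_oscSol, deriv_oscSol]
  refine (hasDerivAt_antiperiodicExt_of_notMem_range halfPeriod_pos hdiff hs).congr_deriv ?_
  have ht₀ := Int.sub_floor_div_mul_nonneg s halfPeriod_pos
  have ht₁ := Int.sub_floor_div_mul_lt s halfPeriod_pos
  have hpos : 0 < oscArc (s - ⌊s / τ⌋ * τ) :=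
    oscArc_pos ⟨ht₀.lt_of_ne fun h => hs ⟨⌊s / τ⌋, (sub_eq_zero.1 h.symm).symm⟩, ht₁⟩
  simp only [oscSol, antiperiodicExt, oscArc_ode]
  rcases Int.even_or_odd ⌊s / τ⌋ with heven | hodd
  · rw [heven.neg_one_zpow, one_mul (oscArc _), Real.sign_of_pos hpos]
    ring
  · rw [hodd.neg_one_zpow, neg_one_mul (oscArc _), Real.sign_neg, Real.sign_of_pos hpos]
    ring

theorem isOscSolOne_oscSol : IsOscSolOne oscSol := by
  refine isOscSolOne_of_hasDerivAt ?_ ?_ fun s => hasDerivAt_deriv₂_oscSol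
  · exact contDiff_antiperiodicExt halfPeriod_pos contDiff_oscArc
      fun k => iteratedDeriv_oscArc_halfPeriod
  · simpa only [oscSol_eq_zero_iff, ofPred_mem_eq] using countable_range _

theorem IsOscSolOne.exists_eq_translate {ψ : ℝ → ℝ} (h : IsOscSolOne ψ) {P : ℝ} (hP : 0 < P)
    (hper : Function.Periodic ψ P) (hne : ∃ s, ψ s ≠ 0) : ∃ s₀, ∀ s, ψ s = oscSol (s + s₀) := by
  have hF := h.isSelfSimilarRelaySol hP hper hne
  obtain ⟨c, hc, hFc, hF₁c⟩ := hF.exists_eq_zero_deriv_pos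
  refine ⟨-Real.log c, fun s => ?_⟩
  have hshift : Function.Periodic (fun s => oscSol (s + -Real.log c)) (2 * τ) :=
    periodic_oscSol.add_const _
  refine congrFun (eq_of_periodic_of_eqOn_Ici (a := Real.log c) hP
    (mul_pos two_pos halfPeriod_pos) hper hshift fun s hs => ?_) s
  have hexp := hF.apply_mul_exp hc hFc hF₁c (t := s - Real.log c) (sub_nonneg.2 hs)
  rw [Real.exp_sub, Real.exp_log hc, mul_div_cancel₀ _ hc.ne', logProfile, Real.log_exp] at hexp
  exact mul_left_cancel₀ (pow_ne_zero 3 (Real.exp_ne_zero s)) hexp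

end PeriodicSolution

theorem periodic_solution_n_eq_one_exists_unique_general
    (T : ℝ) (hT : T = -2 * Real.log ((3 - Real.sqrt 5) / 2)) :
    ∃ φ : ℝ → ℝ, IsOscSolOne φ ∧ Function.Periodic φ T ∧
      (∃ s, 0 < φ s) ∧ (∃ s, φ s < 0) ∧
      (∀ T' : ℝ, 0 < T' → Function.Periodic φ T' → T ≤ T') ∧
      (∀ ψ : ℝ → ℝ, IsOscSolOne ψ → ∀ P : ℝ, 0 < P → Function.Periodic ψ P →
        (∃ s, ψ s ≠ 0) → ∃ s₀ : ℝ, ∀ s, ψ s = φ (s + s₀)) := by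
  obtain rfl : T = 2 * τ := by
    rw [hT, halfPeriod, zeroRatio]
    ring
  exact ⟨oscSol, isOscSolOne_oscSol, periodic_oscSol, exists_oscSol_pos, exists_oscSol_neg,
    fun _ => two_mul_le_of_periodic_antiperiodicExt halfPeriod_pos oscArc_zero
      fun _ ht => (oscArc_pos ht).ne',
    fun _ h _ hP hper hne => h.exists_eq_translate hP hper hne⟩

/-- For `n = 1` the oscillatory-component equation `φ''' + 6φ'' + 11φ' + 6φ + sgn φ = 0`
has a nonconstant sign-changing periodic solution with minimal period
`T = -2 ln((3-√5)/2)`, unique up to translation. -/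
theorem periodic_solution_n_eq_one_exists_unique
    (T : ℝ) (hT : T = -2 * Real.log ((3 - Real.sqrt 5) / 2)) :
    ∃ φ : ℝ → ℝ, IsOscSolOne φ ∧ Function.Periodic φ T ∧
      (∃ s, 0 < φ s) ∧ (∃ s, φ s < 0) ∧
      (∀ T' : ℝ, 0 < T' → Function.Periodic φ T' → T ≤ T') ∧
      (∀ ψ : ℝ → ℝ, IsOscSolOne ψ → Function.Periodic ψ T →
        (∃ s, 0 < ψ s) → (∃ s, ψ s < 0) →
        (∀ T' : ℝ, 0 < T' → Function.Periodic ψ T' → T ≤ T') →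
        ∃ s₀ : ℝ, ∀ s, ψ s = φ (s + s₀)) := by
  have hT₀ : 0 < T := by
    rw [hT, neg_mul, ← mul_neg]
    exact mul_pos two_pos halfPeriod_pos
  obtain ⟨φ, hφ, hper, hpos, hneg, hmin, huniq⟩ :=
    periodic_solution_n_eq_one_exists_unique_general T hT
  exact ⟨φ, hφ, hper, hpos, hneg, hmin,
    fun ψ hψ hψper hψpos _ _ => huniq ψ hψ T hT₀ hψper (hψpos.imp fun _ => ne_of_gt)⟩
end
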